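/- Every vertex operator algebra V of class 𝒜 satisfies the C₂-finiteness condition (dim V/C₂(V) < ∞) and is finitely generated as a vertex operator algebra. In particular, every regular vertex operator algebra satisfies the C₂-finiteness condition and is finitely generated. -/

import Mathlib

noncomputable section

/-- The generalized binomial coefficient `C(m, i)` for `m ∈ ℤ`, `i ∈ ℕ`,
as a complex number: `m(m-1)⋯(m-i+1)/i!`. -/
def cchoose (m : ℤ) (i : ℕ) : ℂ :=
  (∏ j ∈ Finset.range i, ((m : ℂ) - (j : ℂ))) / (Nat.factorial i : ℂ)

/-- A vertex operator algebra `V = ⊕ₙ V₍ₙ₎` over `ℂ`.  The vertex operator map is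
recorded through its modes `op u n v = uₙ v` (so `Y(u,x)v = Σₙ uₙv x^{-n-1}`), with
vacuum `one`, conformal vector `omega` (with `L(k) = ω_{k+1}`), central charge `cc`,
weight grading `wtSpace` with projections `proj`.  The Jacobi identity is recorded in
the equivalent form of the Borcherds identity on modes. -/
structure VOA where
  carrier : Type
  [grp : AddCommGroup carrier]
  [mdl : Module ℂ carrier]
  op : carrier → ℤ → carrier → carrier
  one : carrier
  omega : carrier
  wtSpace : ℤ → Submodule ℂ carrier
  proj : ℤ → carrier → carrier
  cc : ℂ
  op_linear_left : ∀ (n : ℤ) (w : carrier), IsLinearMap ℂ fun u => op u n w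
  op_linear_right : ∀ (u : carrier) (n : ℤ), IsLinearMap ℂ (op u n)
  trunc : ∀ u v : carrier, ∃ N : ℤ, ∀ n : ℤ, N ≤ n → op u n v = 0
  one_op : ∀ (n : ℤ) (v : carrier), op one n v = if n = -1 then v else 0
  create_nonneg : ∀ (v : carrier) (n : ℤ), 0 ≤ n → op v n one = 0
  create : ∀ v : carrier, op v (-1) one = v
  borcherds : ∀ (u v w : carrier) (l m n : ℤ),
    (∑ᶠ i : ℕ, cchoose m i • op (op u (l + (i : ℤ)) v) (m + n - (i : ℤ)) w)
      = ∑ᶠ i : ℕ, ((-1 : ℂ) ^ i * cchoose l i) •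
          (op u (l + m - (i : ℤ)) (op v (n + (i : ℤ)) w)
            - ((-1 : ℂ) ^ l) • op v (l + n - (i : ℤ)) (op u (m + (i : ℤ)) w))
  proj_linear : ∀ n : ℤ, IsLinearMap ℂ (proj n)
  proj_mem : ∀ (n : ℤ) (v : carrier), proj n v ∈ wtSpace n
  proj_eq : ∀ n : ℤ, ∀ v ∈ wtSpace n, proj n v = v
  proj_ne : ∀ m n : ℤ, m ≠ n → ∀ v ∈ wtSpace m, proj n v = 0
  proj_finite : ∀ v : carrier, (Function.support fun n => proj n v).Finite
  proj_sum : ∀ v : carrier, (∑ᶠ n : ℤ, proj n v) = v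
  fd : ∀ n : ℤ, FiniteDimensional ℂ (wtSpace n)
  lower_trunc : ∃ N : ℤ, ∀ n : ℤ, n < N → wtSpace n = ⊥
  one_wt : one ∈ wtSpace 0
  omega_wt : omega ∈ wtSpace 2
  op_wt : ∀ k m n : ℤ, ∀ u ∈ wtSpace k, ∀ v ∈ wtSpace m, op u n v ∈ wtSpace (k + m - n - 1)
  L_zero : ∀ n : ℤ, ∀ v ∈ wtSpace n, op omega 1 v = (n : ℂ) • v
  L_neg_one : ∀ (u : carrier) (n : ℤ) (w : carrier),
    op (op omega 0 u) n w = (-(n : ℂ)) • op u (n - 1) w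
  virasoro : ∀ (m n : ℤ) (v : carrier),
    op omega (m + 1) (op omega (n + 1) v) - op omega (n + 1) (op omega (m + 1) v)
      = ((m : ℂ) - (n : ℂ)) • op omega (m + n + 1) v
        + (if m + n = 0 then (((m : ℂ) ^ 3 - (m : ℂ)) / 12) * cc else 0) • v

attribute [instance] VOA.grp VOA.mdl

namespace VOA

variable (V : VOA)

/-- The Virasoro operator `L(k) = ω_{k+1}`. -/
def L (k : ℤ) (v : V.carrier) : V.carrier := V.op V.omega (k + 1) v

/-- The positive-weight part `V₊ = ⊕_{n ≥ 1} V₍ₙ₎`. -/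
def pos : Submodule ℂ V.carrier := ⨆ (n : ℤ) (_ : 1 ≤ n), V.wtSpace n

/-- Zhu's subspace `C₂(V) = span{u₋₂v : u, v ∈ V}`. -/
def C2 : Submodule ℂ V.carrier :=
  Submodule.span ℂ {x : V.carrier | ∃ u v : V.carrier, x = V.op u (-2) v}

/-- The subspace `C₁(V) = span(v₋₁V₊ (v ∈ V₊) together with L(-1)V)`. -/
def C1 : Submodule ℂ V.carrier :=
  Submodule.span ℂ
    ({x : V.carrier | ∃ u ∈ V.pos, ∃ v ∈ V.pos, x = V.op u (-1) v}
      ∪ {x : V.carrier | ∃ v : V.carrier, x = V.op V.omega 0 v})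

/-- Iterated application of modes: `iterApply [(u¹,n₁),…,(uʳ,n_r)] w = u¹_{n₁} ⋯ uʳ_{n_r} w`. -/
def iterApply : List (V.carrier × ℤ) → V.carrier → V.carrier
  | [], w => w
  | p :: l, w => V.op p.1 p.2 (iterApply l w)

/-- `U ⊆ V` generates `V` as a vertex operator algebra:  `V` is linearly spanned by
the elements `u¹_{n₁} ⋯ uʳ_{n_r} 1` with `uⁱ ∈ U`, `n_i ∈ ℤ`. -/
def generates (U : Set V.carrier) : Prop :=
  Submodule.span ℂ {x : V.carrier | ∃ l : List (V.carrier × ℤ),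
    (∀ p ∈ l, p.1 ∈ U) ∧ x = V.iterApply l V.one} = ⊤

/-- `V` is finitely generated as a vertex operator algebra. -/
def FinitelyGenerated : Prop := ∃ S : Finset V.carrier, V.generates ↑S

end VOA

/-- A weak `V`-module: all axioms of a module (truncation, vacuum, Jacobi identity in
Borcherds form) except those involving gradings. -/
structure WeakModule (V : VOA) where
  carrier : Type
  [grp : AddCommGroup carrier]
  [mdl : Module ℂ carrier]
  op : V.carrier → ℤ → carrier → carrier
  op_linear_left : ∀ (n : ℤ) (w : carrier), IsLinearMap ℂ fun u => op u n w
  op_linear_right : ∀ (u : V.carrier) (n : ℤ), IsLinearMap ℂ (op u n)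
  trunc : ∀ (u : V.carrier) (w : carrier), ∃ N : ℤ, ∀ n : ℤ, N ≤ n → op u n w = 0
  one_op : ∀ (n : ℤ) (w : carrier), op V.one n w = if n = -1 then w else 0
  borcherds : ∀ (u v : V.carrier) (w : carrier) (l m n : ℤ),
    (∑ᶠ i : ℕ, cchoose m i • op (V.op u (l + (i : ℤ)) v) (m + n - (i : ℤ)) w)
      = ∑ᶠ i : ℕ, ((-1 : ℂ) ^ i * cchoose l i) •
          (op u (l + m - (i : ℤ)) (op v (n + (i : ℤ)) w)
            - ((-1 : ℂ) ^ l) • op v (l + n - (i : ℤ)) (op u (m + (i : ℤ)) w))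

attribute [instance] WeakModule.grp WeakModule.mdl

namespace WeakModule

variable {V : VOA} (W : WeakModule V)

/-- `L(0)` acting on a weak module, as a linear map. -/
def L0 : W.carrier →ₗ[ℂ] W.carrier := IsLinearMap.mk' _ (W.op_linear_right V.omega 1)

/-- The `L(0)`-eigenspace of eigenvalue `h`. -/
def eig (h : ℂ) : Submodule ℂ W.carrier :=
  LinearMap.ker (W.L0 - h • (LinearMap.id : W.carrier →ₗ[ℂ] W.carrier))

/-- The coefficient `v*ₙ` of the adjoint vertex operator
`⟨Y*(v,x)α, w⟩ = ⟨α, Y(e^{xL(1)}(-x^{-2})^{L(0)}v, x^{-1})w⟩` acting on the full dual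
space: for `v` homogeneous of weight `h`,
`(v*ₙ α)(w) = (-1)^h Σ_{i≥0} (1/i!) α((L(1)^i v)_{2h-n-i-2} w)`, extended to general
`v` via the weight-space projections. -/
def dmode (v : V.carrier) (n : ℤ) (α : W.carrier → ℂ) (w : W.carrier) : ℂ :=
  ∑ᶠ h : ℤ, ∑ᶠ i : ℕ,
    ((-1 : ℂ) ^ h / (Nat.factorial i : ℂ)) *
      α (W.op ((V.L 1)^[i] (V.proj h v)) (2 * h - n - (i : ℤ) - 2) w)

/-- `D(W) ⊆ W*`: the linear functionals `α` on `W` such that for every `v ∈ V`,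
`Y*(v,x)α ∈ W*((x))`, i.e. `v*ₙ α = 0` for `n` sufficiently large. -/
def DW : Set (W.carrier → ℂ) :=
  {α | IsLinearMap ℂ α ∧
    ∀ v : V.carrier, ∃ N : ℤ, ∀ n : ℤ, N ≤ n → ∀ w : W.carrier, W.dmode v n α w = 0}

/-- A subspace stable under all modes of all vertex operators, i.e. a `V`-submodule. -/
def IsStable (S : Submodule ℂ W.carrier) : Prop :=
  ∀ (v : V.carrier) (n : ℤ), ∀ m ∈ S, W.op v n m ∈ S

/-- An irreducible (nonzero, no proper nonzero stable subspaces) `V`-submodule. -/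
def IsIrreducibleSub (S : Submodule ℂ W.carrier) : Prop :=
  S ≠ ⊥ ∧ W.IsStable S ∧
    ∀ T : Submodule ℂ W.carrier, W.IsStable T → T ≤ S → T = ⊥ ∨ T = S

/-- A stable subspace which is an ordinary module: `L(0)` acts semisimply on it with
finite-dimensional eigenspaces, and for each `h` the eigenvalues `h + m` do not occur
for `m` a sufficiently negative integer. -/
def IsOrdinarySub (S : Submodule ℂ W.carrier) : Prop :=
  S ≤ (⨆ h : ℂ, W.eig h ⊓ S) ∧ (∀ h : ℂ, FiniteDimensional ℂ ↥(W.eig h ⊓ S)) ∧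
    ∀ h : ℂ, ∃ N : ℤ, ∀ m : ℤ, m ≤ N → W.eig (h + (m : ℂ)) ⊓ S = ⊥

/-- The weak module `W` is irreducible. -/
def IsIrreducible : Prop :=
  (⊥ : Submodule ℂ W.carrier) ≠ ⊤ ∧
    ∀ S : Submodule ℂ W.carrier, W.IsStable S → S = ⊥ ∨ S = ⊤

/-- `Cₙ(W) = span{v₋ₙw : v ∈ V, w ∈ W}`. -/
def Cn (n : ℤ) : Submodule ℂ W.carrier :=
  Submodule.span ℂ {x : W.carrier | ∃ (v : V.carrier) (w : W.carrier), x = W.op v (-n) w}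

/-- `B(W) = span(u₋₁W (u ∈ V₊) together with v₀W (v homogeneous, wt v ≥ 2))`. -/
def BW : Submodule ℂ W.carrier :=
  Submodule.span ℂ
    ({x : W.carrier | ∃ v ∈ V.pos, ∃ w : W.carrier, x = W.op v (-1) w}
      ∪ {x : W.carrier | ∃ k : ℤ, 2 ≤ k ∧ ∃ v ∈ V.wtSpace k, ∃ w : W.carrier, x = W.op v 0 w})

/-- Zhu's subspace `O(W) = span{Σ_{i≥0} C(wt v, i) v_{i-2} w}` so that `A(W) = W/O(W)`. -/
def OW : Submodule ℂ W.carrier :=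
  Submodule.span ℂ
    {x : W.carrier | ∃ (k : ℤ) (v : V.carrier), v ∈ V.wtSpace k ∧
      ∃ w : W.carrier, x = ∑ᶠ i : ℕ, cchoose k i • W.op v ((i : ℤ) - 2) w}

/-- A subspace `T ⊇ O(W)` of `W` is closed under the Frenkel–Zhu left and right
`A(V)`-actions `v * w = Σᵢ C(wt v, i) v_{i-1} w` and `w * v = Σᵢ C(wt v - 1, i) v_{i-1} w`;
for `T ⊇ O(W)` this expresses that `T/O(W)` is an `A(V)`-sub-bimodule of `A(W)`. -/
def BimoduleClosed (T : Submodule ℂ W.carrier) : Prop :=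
  ∀ k : ℤ, ∀ v ∈ V.wtSpace k, ∀ w ∈ T,
    (∑ᶠ i : ℕ, cchoose k i • W.op v ((i : ℤ) - 1) w) ∈ T ∧
    (∑ᶠ i : ℕ, cchoose (k - 1) i • W.op v ((i : ℤ) - 1) w) ∈ T

/-- Equivalence (isomorphism) of weak modules. -/
def Equiv (M N : WeakModule V) : Prop :=
  ∃ e : M.carrier ≃ₗ[ℂ] N.carrier,
    ∀ (v : V.carrier) (n : ℤ) (w : M.carrier), e (M.op v n w) = N.op v n (e w)

end WeakModule

/-- `V` is of class 𝒜: `L(0)` acts semisimply on every weak `V`-module. -/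
def VOA.classA (V : VOA) : Prop :=
  ∀ M : WeakModule V, (⨆ h : ℂ, M.eig h) = ⊤

/-- `V` is regular: every weak `V`-module is a direct sum of irreducible ordinary
`V`-modules. -/
def VOA.regular (V : VOA) : Prop :=
  ∀ M : WeakModule V, ∃ (ι : Type) (S : ι → Submodule ℂ M.carrier),
    (∀ i, M.IsIrreducibleSub (S i) ∧ M.IsOrdinarySub (S i)) ∧
    (∀ i, Disjoint (S i) (⨆ (j : ι) (_ : j ≠ i), S j)) ∧ (⨆ i, S i) = ⊤

/-- A generalized `V`-module: a weak module with a semisimple `L(0)`-action, graded by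
the `L(0)`-eigenvalues, with weight-space projections `projW`. -/
structure GenModule (V : VOA) extends WeakModule V where
  wt : ℂ → Submodule ℂ carrier
  projW : ℂ → carrier → carrier
  projW_linear : ∀ h : ℂ, IsLinearMap ℂ (projW h)
  projW_mem : ∀ (h : ℂ) (w : carrier), projW h w ∈ wt h
  projW_eq : ∀ h : ℂ, ∀ w ∈ wt h, projW h w = w
  projW_ne : ∀ g h : ℂ, g ≠ h → ∀ w ∈ wt g, projW h w = 0
  projW_finite : ∀ w : carrier, (Function.support fun h => projW h w).Finite
  projW_sum : ∀ w : carrier, (∑ᶠ h : ℂ, projW h w) = w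
  wt_L0 : ∀ h : ℂ, ∀ w ∈ wt h, op V.omega 1 w = h • w
  wt_op : ∀ k : ℤ, ∀ v ∈ V.wtSpace k, ∀ (h : ℂ) (n : ℤ), ∀ w ∈ wt h,
    op v n w ∈ wt (h + (k : ℂ) - (n : ℂ) - 1)

/-- An ordinary `V`-module: a generalized module whose weight spaces are
finite-dimensional and whose weights are truncated from below in each coset `h + ℤ`. -/
structure OrdModule (V : VOA) extends GenModule V where
  wt_fd : ∀ h : ℂ, FiniteDimensional ℂ ↥(wt h)
  wt_lower : ∀ h : ℂ, ∃ N : ℤ, ∀ m : ℤ, m ≤ N → wt (h + (m : ℂ)) = ⊥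

namespace GenModule

variable {V : VOA} (W : GenModule V)

/-- `W₊ = ⊕_{Re h > 0} W₍ₕ₎`. -/
def posW : Submodule ℂ W.carrier := ⨆ (h : ℂ) (_ : 0 < h.re), W.wt h

/-- `C₁(W) = span(v₋₁W₊ (v ∈ V₊) together with L(-1)W)`. -/
def C1W : Submodule ℂ W.carrier :=
  Submodule.span ℂ
    ({x : W.carrier | ∃ v ∈ V.pos, ∃ w ∈ W.posW, x = W.op v (-1) w}
      ∪ {x : W.carrier | ∃ w : W.carrier, x = W.op V.omega 0 w})

/-- The restricted dual `W' = ⊕ₕ W₍ₕ₎* ⊆ W*`: the linear functionals vanishing on all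
but finitely many weight spaces. -/
def restrictedDual : Set (W.carrier → ℂ) :=
  {α | IsLinearMap ℂ α ∧ {h : ℂ | ∃ w ∈ W.wt h, α w ≠ 0}.Finite}

end GenModule

/-- `D(W)⁰`: the sum of the `L(0)`-eigenspaces of the weak module `D(W) ⊆ W*`, where
`L*(0) = ω*₁` acts on `α ∈ W*` by `(L*(0)α)(w) = α(L(0)w)`. -/
def OrdModule.DW0 {V : VOA} (W : OrdModule V) : Set (W.carrier → ℂ) :=
  {α | ∃ (S : Finset ℂ) (f : ℂ → (W.carrier → ℂ)),
    (∀ h ∈ S, f h ∈ W.toWeakModule.DW ∧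
      ∀ w : W.carrier, f h (W.op V.omega 1 w) = h * f h w) ∧
    α = ∑ h ∈ S, f h}

/-- An ℕ-gradable weak `V`-module: a weak module with an ℕ-grading
`W = ⊕_{n∈ℕ} W(n)` with `v_m W(n) ⊆ W(wt v + n - m - 1)` (graded pieces of negative
index are zero). -/
structure NGradedModule (V : VOA) extends WeakModule V where
  gr : ℤ → Submodule ℂ carrier
  gr_neg : ∀ n : ℤ, n < 0 → gr n = ⊥
  gr_sup : (⨆ n : ℤ, gr n) = ⊤
  gr_indep : ∀ n : ℤ, Disjoint (gr n) (⨆ (m : ℤ) (_ : m ≠ n), gr m)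
  gr_op : ∀ k : ℤ, ∀ v ∈ V.wtSpace k, ∀ m n : ℤ, ∀ w ∈ gr n,
    op v m w ∈ gr (k + n - m - 1)

/-- An intertwining operator of type `(W₃; W₁ W₂)` in the sense of
Frenkel–Huang–Lepowsky, recorded through its complex-indexed modes
`I w₁ h w₂ = (w₁)ₕ w₂` (so `Y(w₁,x)w₂ = Σ_{h∈ℂ} (w₁)ₕ w₂ x^{-h-1}`):
linearity, truncation, the `L(-1)`-derivative property, and the Jacobi identity in
component (Borcherds) form. -/
def IsIntertwiner {V : VOA} (W1 W2 W3 : OrdModule V)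
    (I : W1.carrier → ℂ → W2.carrier → W3.carrier) : Prop :=
  (∀ (h : ℂ) (w2 : W2.carrier), IsLinearMap ℂ fun w1 => I w1 h w2) ∧
  (∀ (w1 : W1.carrier) (h : ℂ), IsLinearMap ℂ (I w1 h)) ∧
  (∀ (w1 : W1.carrier) (w2 : W2.carrier) (h : ℂ),
    ∃ N : ℤ, ∀ n : ℤ, N ≤ n → I w1 (h + (n : ℂ)) w2 = 0) ∧
  (∀ (w1 : W1.carrier) (h : ℂ) (w2 : W2.carrier),
    I (W1.op V.omega 0 w1) h w2 = (-h) • I w1 (h - 1) w2) ∧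
  (∀ (u : V.carrier) (w1 : W1.carrier) (w2 : W2.carrier) (l m : ℤ) (h : ℂ),
    (∑ᶠ i : ℕ, cchoose m i • I (W1.op u (l + (i : ℤ)) w1) ((m : ℂ) + h - (i : ℂ)) w2)
      = ∑ᶠ i : ℕ, ((-1 : ℂ) ^ i * cchoose l i) •
          (W3.op u (l + m - (i : ℤ)) (I w1 (h + (i : ℂ)) w2)
            - ((-1 : ℂ) ^ l) • I w1 ((l : ℂ) + h - (i : ℂ)) (W2.op u (m + (i : ℤ)) w2)))

/-- The fusion rule `dim I(W₃; W₁W₂)` is finite: the space of intertwining operators of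
the indicated type is finite-dimensional. -/
def FusionFinite {V : VOA} (W1 W2 W3 : OrdModule V) : Prop :=
  FiniteDimensional ℂ
    ↥(Submodule.span ℂ {I : W1.carrier → ℂ → W2.carrier → W3.carrier |
        IsIntertwiner W1 W2 W3 I})

end

/-!
Let `V` be of class 𝒜 and `W` a weak `V`-module. The functionals on `W` killed by the adjoint modes
`v*ₙ` for `n ≫ 0` form a weak module `D(W) ⊆ W*`, which contains every functional vanishing on some
`C_m(W)`. As `L(0)` acts semisimply on `D(W)`, every `α ∈ D(W)` is nonzero on only finitely many
`L(0)`-eigenspaces of `W`. Eigenvectors outside `C_m(W)` with distinct eigenvalues are linearly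
independent modulo `C_m(W)`, so some functional vanishing on `C_m(W)` is nonzero on all of them;
hence all but finitely many eigenspaces lie in `C_m(W)`. For `W = V` and `m = 2` this is
`C₂`-finiteness; for large `m` it yields generation by finitely many weight spaces, by induction on
the weight.

The Borcherds identity on `D(W)` follows from the one on `W`, once conjugating `Y(u, z)` by
`exp(x L(1))` is known to substitute into `Y(·, z)` as expected. Both sides of that conjugation
formula, expanded in powers of `x`, satisfy the same first-order recursion.
-/

section BinomialCoefficients

lemma cchoose_zero (m : ℤ) : cchoose m 0 = 1 := by simp [cchoose]

lemma cchoose_eq_ringChoose (m : ℤ) (i : ℕ) : cchoose m i = (Ring.choose m i : ℤ) := by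
  have h := congrArg (Int.cast : ℤ → ℂ) (Ring.descPochhammer_eq_factorial_smul_choose m i)
  rw [← Polynomial.eval_eq_smeval, descPochhammer_eval_eq_prod_range] at h
  rw [cchoose, div_eq_iff (Nat.cast_ne_zero.mpr i.factorial_ne_zero), mul_comm]
  simpa using h

lemma cchoose_zero_succ (i : ℕ) : cchoose 0 (i + 1) = 0 := by
  rw [cchoose_eq_ringChoose, Ring.choose_zero_succ, Int.cast_zero]

lemma cchoose_natCast (k i : ℕ) : cchoose k i = k.choose i := by
  rw [cchoose_eq_ringChoose, Ring.choose_natCast, Int.cast_natCast]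

lemma cchoose_succ_succ (m : ℤ) (i : ℕ) :
    cchoose (m + 1) (i + 1) = cchoose m i + cchoose m (i + 1) := by
  simp only [cchoose_eq_ringChoose, Ring.choose_succ_succ, Int.cast_add]

lemma succ_mul_cchoose_succ (m : ℤ) (i : ℕ) :
    ((i : ℂ) + 1) * cchoose m (i + 1) = (m - i) * cchoose m i := by
  have hi : (i : ℂ) + 1 ≠ 0 := i.cast_add_one_ne_zero
  have hf : (i.factorial : ℂ) ≠ 0 := Nat.cast_ne_zero.mpr i.factorial_ne_zero
  rw [cchoose, cchoose, Finset.prod_range_succ, Nat.factorial_succ]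
  push_cast
  field_simp

lemma succ_mul_cchoose_succ_eq_mul_pred (m : ℤ) (i : ℕ) :
    ((i : ℂ) + 1) * cchoose m (i + 1) = m * cchoose (m - 1) i := by
  have pascal := cchoose_succ_succ (m - 1) i
  rw [sub_add_cancel] at pascal
  have absorb := succ_mul_cchoose_succ (m - 1) i
  push_cast at absorb
  rw [pascal]
  linear_combination absorb

end BinomialCoefficients

section Sums

open Finset.HasAntidiagonal (antidiagonal mem_antidiagonal)

variable {M : Type*} [AddCommMonoid M]

-- The Leibniz rule for the coefficients of a product of two power series.
lemma succ_smul_sum_antidiagonal_succ [Module ℂ M] (f : ℕ → ℕ → M) (N : ℕ) :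
    ((N : ℂ) + 1) • ∑ x ∈ antidiagonal (N + 1), f x.1 x.2 =
      ∑ x ∈ antidiagonal N, ((x.1 : ℂ) + 1) • f (x.1 + 1) x.2 +
        ∑ x ∈ antidiagonal N, ((x.2 : ℂ) + 1) • f x.1 (x.2 + 1) := by
  have split : ((N : ℂ) + 1) • ∑ x ∈ antidiagonal (N + 1), f x.1 x.2 =
      ∑ x ∈ antidiagonal (N + 1), (x.1 : ℂ) • f x.1 x.2 +
        ∑ x ∈ antidiagonal (N + 1), (x.2 : ℂ) • f x.1 x.2 := by
    rw [Finset.smul_sum, ← Finset.sum_add_distrib]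
    refine Finset.sum_congr rfl fun x hx => ?_
    rw [← add_smul]
    congr 1
    exact_mod_cast (mem_antidiagonal.mp hx).symm
  rw [split, Finset.Nat.sum_antidiagonal_succ, Finset.Nat.sum_antidiagonal_succ']
  simp only [Nat.cast_zero, zero_smul, zero_add, Nat.cast_succ]

lemma finsum_eq_finsum_sum_antidiagonal {f : ℕ × ℕ → M} (hf : f.HasFiniteSupport) :
    ∑ᶠ x, f x = ∑ᶠ N, ∑ x ∈ antidiagonal N, f x := by
  classical
  rw [finsum_eq_sum f hf, ← finsum_sum_filter (fun x : ℕ × ℕ => x.1 + x.2)]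
  refine finsum_congr fun N => ?_
  refine Finset.sum_subset_zero_on_sdiff (fun x hx => ?_) (fun x hx => ?_) fun _ _ => rfl
  · exact mem_antidiagonal.mpr (Finset.mem_filter.mp hx).2
  · obtain ⟨hN, hx⟩ := Finset.mem_sdiff.mp hx
    by_contra hne
    exact hx (Finset.mem_filter.mpr ⟨hf.mem_toFinset.mpr hne, mem_antidiagonal.mp hN⟩)

lemma finsum_eq_finsum_sum_antidiagonal₃ {f : ℕ × ℕ × ℕ → M} (hf : f.HasFiniteSupport) :
    ∑ᶠ x, f x = ∑ᶠ N, ∑ x ∈ antidiagonal N, ∑ y ∈ antidiagonal x.2, f (x.1, y) := by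
  have inner (t : ℕ) : ∑ᶠ y, f (t, y) = ∑ᶠ s, ∑ y ∈ antidiagonal s, f (t, y) :=
    finsum_eq_finsum_sum_antidiagonal (hf.fun_comp_of_injective (Prod.mk_right_injective t))
  have outer : (fun x : ℕ × ℕ => ∑ y ∈ antidiagonal x.2, f (x.1, y)).HasFiniteSupport := by
    refine (hf.image fun x => (x.1, x.2.1 + x.2.2)).subset fun x hx => ?_
    obtain ⟨y, hy, hne⟩ := Finset.exists_ne_zero_of_sum_ne_zero hx
    exact ⟨(x.1, y), hne, Prod.ext rfl (mem_antidiagonal.mp hy)⟩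
  rw [finsum_curry f hf, finsum_congr inner,
    ← finsum_curry (fun x : ℕ × ℕ => ∑ y ∈ antidiagonal x.2, f (x.1, y)) outer,
    finsum_eq_finsum_sum_antidiagonal outer]

lemma hasFiniteSupport_of_eventually_eq_zero {M : Type*} [Zero M] {f : ℕ → M}
    (hf : ∀ᶠ i in Filter.atTop, f i = 0) : f.HasFiniteSupport := by
  rwa [← Nat.cofinite_eq_atTop] at hf

lemma hasFiniteSupport_of_curry {ι κ M : Type*} [Zero M] {f : ι × κ → M}
    (hfst : (fun i j => f (i, j)).HasFiniteSupport)
    (hsnd : ∀ i, (fun j => f (i, j)).HasFiniteSupport) : f.HasFiniteSupport := by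
  refine (hfst.biUnion fun i _ => (hsnd i).image (Prod.mk i)).subset fun x hx => ?_
  exact Set.mem_biUnion (fun h => hx (congrFun h x.2)) ⟨x.2, hx, rfl⟩

end Sums

namespace WeakModule

variable {V : VOA} (W : WeakModule V)

/-- The modes `v ↦ vₙ` of a weak module, as a linear map into its endomorphisms. -/
def mode (n : ℤ) : V.carrier →ₗ[ℂ] Module.End ℂ W.carrier :=
  LinearMap.mk₂ ℂ (fun v w => W.op v n w)
    (fun u v w => (W.op_linear_left n w).map_add u v)
    (fun c v w => (W.op_linear_left n w).map_smul c v)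
    (fun v => (W.op_linear_right v n).map_add)
    (fun c v => (W.op_linear_right v n).map_smul c)

lemma mode_apply (n : ℤ) (v : V.carrier) (w : W.carrier) : W.mode n v w = W.op v n w := rfl

lemma mode_one_neg_one : W.mode (-1) V.one = 1 :=
  LinearMap.ext fun w => (W.one_op (-1) w).trans (if_pos rfl)

lemma mode_one_of_ne {n : ℤ} (hn : n ≠ -1) : W.mode n V.one = 0 :=
  LinearMap.ext fun w => (W.one_op n w).trans (if_neg hn)

lemma eventually_mode_add_eq_zero (v : V.carrier) (w : W.carrier) (a : ℤ) :
    ∀ᶠ i : ℕ in Filter.atTop, W.mode (a + i) v w = 0 := by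
  obtain ⟨N, hN⟩ := W.trunc v w
  filter_upwards [Filter.eventually_ge_atTop (N - a).toNat] with i hi
  exact hN _ (by omega)

end WeakModule

namespace VOA

variable (V : VOA)

/-- The adjoint module: `V` regarded as a weak module over itself. -/
def adjoint : WeakModule V where
  carrier := V.carrier
  op := V.op
  op_linear_left := V.op_linear_left
  op_linear_right := V.op_linear_right
  trunc := V.trunc
  one_op := V.one_op
  borcherds := V.borcherds

/-- The modes `v ↦ vₙ` of the vertex operator algebra, as a linear map into its
endomorphisms. -/
def mode (n : ℤ) : V.carrier →ₗ[ℂ] Module.End ℂ V.carrier := V.adjoint.mode n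

lemma mode_apply (n : ℤ) (u v : V.carrier) : V.mode n u v = V.op u n v := rfl

lemma eventually_mode_add_eq_zero (u v : V.carrier) (a : ℤ) :
    ∀ᶠ i : ℕ in Filter.atTop, V.mode (a + i) u v = 0 :=
  V.adjoint.eventually_mode_add_eq_zero u v a

variable {V}

lemma mode_mem_wtSpace {h k : ℤ} {u v : V.carrier} (hu : u ∈ V.wtSpace h)
    (hv : v ∈ V.wtSpace k) (n : ℤ) : V.mode n u v ∈ V.wtSpace (h + k - n - 1) :=
  V.op_wt h k n u hu v hv

lemma mode_zero_omega (u : V.carrier) : V.mode 0 V.omega u = V.mode (-2) u V.one := by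
  have h := V.L_neg_one u (-1) V.one
  rw [V.create] at h
  simpa using! h

end VOA

namespace WeakModule

variable {V : VOA} (W : WeakModule V)

lemma hasFiniteSupport_borcherds_left (u v : V.carrier) (w : W.carrier) (l m n : ℤ) :
    (fun i : ℕ => cchoose m i •
      W.mode (m + n - i) (V.mode (l + i) u v) w).HasFiniteSupport := by
  refine hasFiniteSupport_of_eventually_eq_zero ?_
  filter_upwards [V.eventually_mode_add_eq_zero u v l] with i hi
  rw [hi, map_zero, LinearMap.zero_apply, smul_zero]

lemma hasFiniteSupport_borcherds_right (u v : V.carrier) (w : W.carrier) (l m n : ℤ) :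
    (fun i : ℕ => ((-1 : ℂ) ^ i * cchoose l i) •
      (W.mode (l + m - i) u (W.mode (n + i) v w) -
        (-1 : ℂ) ^ l • W.mode (l + n - i) v (W.mode (m + i) u w))).HasFiniteSupport := by
  refine hasFiniteSupport_of_eventually_eq_zero ?_
  filter_upwards [W.eventually_mode_add_eq_zero v w n, W.eventually_mode_add_eq_zero u w m]
    with i hv hu
  rw [hv, hu, map_zero, map_zero, smul_zero, sub_zero, smul_zero]

lemma mode_borcherds (u v : V.carrier) (w : W.carrier) (l m n : ℤ) :
    ∑ᶠ i : ℕ, cchoose m i • W.mode (m + n - i) (V.mode (l + i) u v) w =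
      ∑ᶠ i : ℕ, ((-1 : ℂ) ^ i * cchoose l i) •
        (W.mode (l + m - i) u (W.mode (n + i) v w) -
          (-1 : ℂ) ^ l • W.mode (l + n - i) v (W.mode (m + i) u w)) :=
  W.borcherds u v w l m n

lemma mode_commutator (u v : V.carrier) (w : W.carrier) (m n : ℤ) :
    W.mode m u (W.mode n v w) - W.mode n v (W.mode m u w) =
      ∑ᶠ i : ℕ, cchoose m i • W.mode (m + n - i) (V.mode i u v) w := by
  have borcherds := W.mode_borcherds u v w 0 m n
  rw [finsum_eq_single (fun i : ℕ => ((-1 : ℂ) ^ i * cchoose 0 i) • _) 0 fun i hi => by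
    rw [← Nat.succ_pred hi, cchoose_zero_succ, mul_zero, zero_smul]] at borcherds
  simpa [cchoose_zero] using borcherds.symm

lemma mode_mode (u v : V.carrier) (w : W.carrier) (l n : ℤ) :
    W.mode n (V.mode l u v) w =
      ∑ᶠ i : ℕ, ((-1 : ℂ) ^ i * cchoose l i) •
        (W.mode (l - i) u (W.mode (n + i) v w) -
          (-1 : ℂ) ^ l • W.mode (l + n - i) v (W.mode i u w)) := by
  have borcherds := W.mode_borcherds u v w l 0 n
  rw [finsum_eq_single (fun i : ℕ => cchoose 0 i • _) 0 fun i hi => by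
    rw [← Nat.succ_pred hi, cchoose_zero_succ, zero_smul]] at borcherds
  simpa [cchoose_zero] using borcherds

-- With `n = -1` only the term `i = 0` of the right-hand side of the Borcherds identity for
-- `u` and the vacuum survives.
lemma mode_mode_zero_omega (u : V.carrier) (n : ℤ) :
    W.mode n (V.mode 0 V.omega u) = (-(n : ℂ)) • W.mode (n - 1) u := by
  ext w
  have left : ∑ᶠ i : ℕ, cchoose (n + 1) i •
      W.mode (n + 1 + -1 - i) (V.mode (-2 + i) u V.one) w =
      W.mode n (V.mode 0 V.omega u) w + ((n : ℂ) + 1) • W.mode (n - 1) u w := by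
    rw [finsum_eq_sum_of_support_subset (s := Finset.range 2)]
    · have hu : V.mode (-1) u V.one = u := V.create u
      rw [Finset.sum_range_succ, Finset.sum_range_one, VOA.mode_zero_omega]
      simp [cchoose, hu, sub_eq_add_neg]
    · refine Function.support_subset_iff'.mpr fun i hi => ?_
      have hi : 2 ≤ i := not_lt.mp (mt Finset.mem_range.mpr hi)
      have hu : V.mode (-2 + i) u V.one = 0 := V.create_nonneg u _ (by omega)
      rw [hu, map_zero, LinearMap.zero_apply, smul_zero]
  have right := W.mode_borcherds u V.one w (-2) (n + 1) (-1)
  rw [left, finsum_eq_single _ 0 fun i hi => by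
      rw [W.mode_one_of_ne (by omega), W.mode_one_of_ne (by omega)]
      simp] at right
  rw [W.mode_one_of_ne (n := -2 + -1 - (0 : ℕ)) (by omega)] at right
  simp only [pow_zero, cchoose_zero, Nat.cast_zero, add_zero, sub_zero, mode_one_neg_one,
    Module.End.one_apply, LinearMap.zero_apply, smul_zero, one_mul, one_smul,
    show (-2 : ℤ) + (n + 1) = n - 1 by ring] at right
  rw [LinearMap.smul_apply, eq_sub_of_add_eq right]
  module

lemma mem_eig {c : ℂ} {w : W.carrier} : w ∈ W.eig c ↔ W.mode 1 V.omega w = c • w := by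
  rw [eig, LinearMap.mem_ker, LinearMap.sub_apply, sub_eq_zero]
  rfl

end WeakModule

namespace VOA

open Finset.HasAntidiagonal (antidiagonal)

variable (V : VOA)

/-- The operator `L(1) = ω₂`. -/
def L1 : Module.End ℂ V.carrier := V.mode 2 V.omega

/-- The divided power `L(1)^i / i!`. -/
noncomputable def L1Div (i : ℕ) : Module.End ℂ V.carrier := (i.factorial : ℂ)⁻¹ • V.L1 ^ i

variable {V}

lemma L1Div_zero : V.L1Div 0 = 1 := by
  rw [L1Div, Nat.factorial_zero, Nat.cast_one, inv_one, one_smul, pow_zero]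

lemma succ_smul_L1Div_succ (i : ℕ) : ((i : ℂ) + 1) • V.L1Div (i + 1) = V.L1Div i * V.L1 := by
  have hi : (i : ℂ) + 1 ≠ 0 := i.cast_add_one_ne_zero
  rw [L1Div, L1Div, smul_smul, Nat.factorial_succ, smul_mul_assoc, pow_succ]
  push_cast
  rw [mul_inv, mul_inv_cancel_left₀ hi]

lemma succ_smul_mode_L1Div_succ (n : ℤ) (i : ℕ) (v : V.carrier) :
    ((i : ℂ) + 1) • V.mode n (V.L1Div (i + 1) v) = V.mode n (V.L1Div i (V.L1 v)) := by
  rw [← map_smul, ← LinearMap.smul_apply, succ_smul_L1Div_succ, Module.End.mul_apply]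

lemma L1_mem_wtSpace {h : ℤ} {v : V.carrier} (hv : v ∈ V.wtSpace h) :
    V.L1 v ∈ V.wtSpace (h - 1) := by
  have := mode_mem_wtSpace V.omega_wt hv 2
  rwa [show 2 + h - 2 - 1 = h - 1 by ring] at this

lemma L1_pow_mem_wtSpace {h : ℤ} {v : V.carrier} (hv : v ∈ V.wtSpace h) (i : ℕ) :
    (V.L1 ^ i) v ∈ V.wtSpace (h - i) := by
  induction i with
  | zero => simpa using hv
  | succ i ih =>
    rw [pow_succ', Module.End.mul_apply, Nat.cast_succ, ← sub_sub]
    exact L1_mem_wtSpace ih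

lemma eventually_L1Div_eq_zero_of_mem_wtSpace {h : ℤ} {v : V.carrier} (hv : v ∈ V.wtSpace h) :
    ∀ᶠ i in Filter.atTop, V.L1Div i v = 0 := by
  obtain ⟨N, hN⟩ := V.lower_trunc
  filter_upwards [Filter.eventually_gt_atTop (h - N).toNat] with i hi
  have hpow := L1_pow_mem_wtSpace hv i
  rw [hN _ (by omega), Submodule.mem_bot] at hpow
  rw [L1Div, LinearMap.smul_apply, hpow, smul_zero]

@[elab_as_elim]
lemma homogeneous_induction {P : V.carrier → Prop} (v : V.carrier)
    (homogeneous : ∀ (h : ℤ), ∀ v ∈ V.wtSpace h, P v)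
    (add : ∀ u v, P u → P v → P (u + v)) : P v := by
  rw [← V.proj_sum v]
  exact finsum_induction P (homogeneous 0 0 (zero_mem _)) add fun h =>
    homogeneous h _ (V.proj_mem h v)

lemma eventually_L1Div_eq_zero (v : V.carrier) : ∀ᶠ i in Filter.atTop, V.L1Div i v = 0 := by
  induction v using homogeneous_induction with
  | homogeneous h v hv => exact eventually_L1Div_eq_zero_of_mem_wtSpace hv
  | add u v hu hv =>
    filter_upwards [hu, hv] with i hu hv
    rw [map_add, hu, hv, add_zero]

lemma L1_mul_mode {h : ℤ} {u : V.carrier} (hu : u ∈ V.wtSpace h) (n : ℤ) :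
    V.L1 * V.mode n u =
      V.mode n (V.L1 u) + (2 * h - n - 2 : ℂ) • V.mode (n + 1) u + V.mode n u * V.L1 := by
  ext w
  have comm := V.adjoint.mode_commutator V.omega u w 2 n
  rw [finsum_eq_sum_of_support_subset (s := Finset.range 3)] at comm
  · have hω₀ := V.adjoint.mode_mode_zero_omega u (n + 2)
    have hω₁ : V.mode 1 V.omega u = (h : ℂ) • u := V.L_zero h u hu
    have hω₂ : V.mode 2 V.omega u = V.L1 u := rfl
    have c₁ : cchoose 2 1 = 2 := by simp [cchoose]
    have c₂ : cchoose 2 2 = 1 := by simpa using cchoose_natCast 2 2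
    simp only [Finset.sum_range_succ, Finset.sum_range_zero, zero_add, Nat.cast_zero,
      Nat.cast_one, Nat.cast_ofNat, cchoose_zero, c₁, c₂, hω₁, hω₂, sub_zero, one_smul,
      map_smul, add_comm 2 n, hω₀, add_sub_cancel_right,
      show n + 2 - 1 = n + 1 by ring] at comm
    change V.L1 (V.mode n u w) - V.mode n u (V.L1 w) = _ at comm
    simp only [LinearMap.add_apply, LinearMap.smul_apply, Module.End.mul_apply,
      eq_add_of_sub_eq comm]
    change (-((n + 2 : ℤ) : ℂ)) • V.mode (n + 1) u w + (2 : ℂ) • (h : ℂ) • V.mode (n + 1) u w +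
      V.mode n (V.L1 u) w + _ = _
    push_cast
    module
  · refine Function.support_subset_iff'.mpr fun i hi => ?_
    have hi : 2 < i := not_le.mp (mt (Finset.mem_range.mpr <| Nat.lt_succ_of_le ·) hi)
    have hc : cchoose 2 i = 0 := by
      simpa [Nat.choose_eq_zero_of_lt hi] using cchoose_natCast 2 i
    rw [hc, zero_smul]

/-- The operator `∑_{p+q=s} C(a-p, q) (L(1)^p u / p!)_{n+q}`. For `u` of weight `h` and
`a = 2h - 2 - n` it is the coefficient of `z^s` in `e^{zL(1)} uₙ e^{-zL(1)}`. -/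
noncomputable def conjMode (a n : ℤ) (s : ℕ) (u : V.carrier) : Module.End ℂ V.carrier :=
  ∑ x ∈ antidiagonal s, cchoose (a - x.1) x.2 • V.mode (n + x.2) (V.L1Div x.1 u)

lemma sum_cchoose_smul_mode_L1Div_sub (a n : ℤ) (s : ℕ) (u : V.carrier) :
    conjMode a n s (V.L1 u) - ∑ x ∈ antidiagonal s, ((x.1 : ℂ) * cchoose (a - x.1) x.2) •
        V.mode (n + 1 + x.2) (V.L1Div x.1 u) =
      conjMode (a - 1) n s (V.L1 u) := by
  cases s with
  | zero => simp [conjMode, cchoose_zero]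
  | succ s =>
    rw [conjMode, conjMode, Finset.Nat.sum_antidiagonal_succ',
      Finset.Nat.sum_antidiagonal_succ' (f := fun x => cchoose (a - 1 - x.1) x.2 • _),
      Finset.Nat.sum_antidiagonal_succ]
    simp only [cchoose_zero, Nat.cast_zero, zero_mul, zero_smul, zero_add, add_sub_assoc,
      ← Finset.sum_sub_distrib]
    congr 1
    refine Finset.sum_congr rfl fun x _ => ?_
    have pascal := cchoose_succ_succ (a - 1 - x.1) x.2
    rw [show a - 1 - (x.1 : ℤ) + 1 = a - x.1 by ring] at pascal
    push_cast
    rw [mul_comm, mul_smul, succ_smul_mode_L1Div_succ, pascal, add_assoc n,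
      add_comm (1 : ℤ) (x.2 : ℤ), show a - ((x.1 : ℤ) + 1) = a - 1 - x.1 by ring]
    module

lemma succ_smul_conjMode_succ (a n : ℤ) (s : ℕ) (u : V.carrier) :
    ((s : ℂ) + 1) • conjMode a n (s + 1) u =
      conjMode (a - 2) n s (V.L1 u) + (a : ℂ) • conjMode (a - 1) (n + 1) s u := by
  have first (x : ℕ × ℕ) : ((x.1 : ℂ) + 1) • cchoose (a - (x.1 + 1 : ℕ)) x.2 •
      V.mode (n + x.2) (V.L1Div (x.1 + 1) u) =
      cchoose (a - 1 - x.1) x.2 • V.mode (n + x.2) (V.L1Div x.1 (V.L1 u)) := by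
    rw [smul_comm, succ_smul_mode_L1Div_succ, Nat.cast_succ, add_comm (x.1 : ℤ), sub_sub]
  have second (x : ℕ × ℕ) : ((x.2 : ℂ) + 1) • cchoose (a - x.1) (x.2 + 1) •
      V.mode (n + (x.2 + 1 : ℕ)) (V.L1Div x.1 u) =
      (a : ℂ) • cchoose (a - 1 - x.1) x.2 • V.mode (n + 1 + x.2) (V.L1Div x.1 u) -
        ((x.1 : ℂ) * cchoose (a - 1 - x.1) x.2) • V.mode (n + 1 + x.2) (V.L1Div x.1 u) := by
    rw [smul_smul, succ_mul_cchoose_succ_eq_mul_pred, show a - 1 - (x.1 : ℤ) = a - x.1 - 1 by ring,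
      Nat.cast_succ, add_assoc n, add_comm (1 : ℤ) (x.2 : ℤ)]
    push_cast
    module
  rw [conjMode, succ_smul_sum_antidiagonal_succ
    fun p q => cchoose (a - p) q • V.mode (n + q) (V.L1Div p u)]
  simp only [first, second, Finset.sum_sub_distrib, ← Finset.smul_sum]
  have shift := sum_cchoose_smul_mode_L1Div_sub (a - 1) n s u
  rw [sub_sub, one_add_one_eq_two] at shift
  rw [← shift, conjMode, conjMode]
  abel

/-- The coefficient of `z^N` in `∑ᵢ C(m, i) (-z)^i e^{zL(1)} u_{l+i}`. -/
noncomputable def expMulModes (m l : ℤ) (N : ℕ) (u : V.carrier) : Module.End ℂ V.carrier :=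
  ∑ x ∈ antidiagonal N, ((-1 : ℂ) ^ x.1 * cchoose m x.1) • (V.L1Div x.2 * V.mode (l + x.1) u)

lemma succ_smul_expMulModes_succ {h : ℤ} {u : V.carrier} (hu : u ∈ V.wtSpace h) (m l : ℤ)
    (N : ℕ) :
    ((N : ℂ) + 1) • expMulModes m l (N + 1) u =
      expMulModes m l N u * V.L1 + expMulModes m l N (V.L1 u) +
        ((2 * h - 2 - l - m : ℤ) : ℂ) • expMulModes m (l + 1) N u := by
  rw [expMulModes, succ_smul_sum_antidiagonal_succ fun i r =>
    ((-1 : ℂ) ^ i * cchoose m i) • (V.L1Div r * V.mode (l + i) u)]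
  simp only [expMulModes, Finset.sum_mul, Finset.smul_sum, ← Finset.sum_add_distrib]
  refine Finset.sum_congr rfl fun x _ => ?_
  rw [smul_comm ((x.2 : ℂ) + 1), ← smul_mul_assoc ((x.2 : ℂ) + 1), succ_smul_L1Div_succ,
    mul_assoc, L1_mul_mode hu, smul_smul, pow_succ, mul_left_comm, succ_mul_cchoose_succ,
    Nat.cast_succ, add_assoc l, add_assoc l, add_comm (x.1 : ℤ) 1]
  simp only [mul_add, mul_smul_comm, smul_mul_assoc, mul_assoc]
  push_cast
  module

lemma expMulModes_eq_sum_conjMode_mul {h m l a : ℤ} {u : V.carrier} (hu : u ∈ V.wtSpace h)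
    (ha : l + m + a = 2 * h - 2) (N : ℕ) :
    expMulModes m l N u = ∑ x ∈ antidiagonal N, conjMode a l x.2 u * V.L1Div x.1 := by
  induction N generalizing h l a u with
  | zero => simp [expMulModes, conjMode, cchoose_zero, L1Div_zero]
  | succ N ih =>
    refine smul_right_injective _ (N.cast_add_one_ne_zero : (N : ℂ) + 1 ≠ 0) ?_
    dsimp only
    rw [succ_smul_expMulModes_succ hu, ih hu ha,
      ih (L1_mem_wtSpace hu) (a := a - 2) (by linarith),
      ih hu (l := l + 1) (a := a - 1) (by linarith),
      succ_smul_sum_antidiagonal_succ fun t s => conjMode a l s u * V.L1Div t,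
      show 2 * h - 2 - l - m = a by linarith]
    simp only [Finset.sum_mul, Finset.smul_sum, ← Finset.sum_add_distrib]
    refine Finset.sum_congr rfl fun x _ => ?_
    rw [← mul_smul_comm ((x.1 : ℂ) + 1), succ_smul_L1Div_succ, ← smul_mul_assoc ((x.2 : ℂ) + 1),
      succ_smul_conjMode_succ, add_mul, smul_mul_assoc, mul_assoc, add_assoc]

end VOA

namespace WeakModule

open Finset.HasAntidiagonal (antidiagonal mem_antidiagonal)

variable {V : VOA} (W : WeakModule V)

lemma hasFiniteSupport_mode_L1Div (N : ℤ) (v : V.carrier) :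
    (fun i : ℕ => W.mode (N - i) (V.L1Div i v)).HasFiniteSupport := by
  refine hasFiniteSupport_of_eventually_eq_zero ?_
  filter_upwards [VOA.eventually_L1Div_eq_zero v] with i hi
  rw [hi, map_zero]

/-- The operator `∑ᵢ (L(1)^i v / i!)_{N-i}`: the coefficient of `x^{N+1}` in
`Y(e^{xL(1)} v, x⁻¹)`. -/
noncomputable def expMode (N : ℤ) : V.carrier →ₗ[ℂ] Module.End ℂ W.carrier where
  toFun v := ∑ᶠ i : ℕ, W.mode (N - i) (V.L1Div i v)
  map_add' u v := by
    rw [← finsum_add_distrib (W.hasFiniteSupport_mode_L1Div N u)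
      (W.hasFiniteSupport_mode_L1Div N v)]
    simp only [map_add]
  map_smul' c v := by
    rw [RingHom.id_apply, smul_finsum]
    simp only [map_smul]

lemma expMode_apply (N : ℤ) (v : V.carrier) (w : W.carrier) :
    W.expMode N v w = ∑ᶠ i : ℕ, W.mode (N - i) (V.L1Div i v) w :=
  map_finsum (LinearMap.applyₗ w) (W.hasFiniteSupport_mode_L1Div N v)

lemma expMode_apply_eq_sum_range {B : ℕ} {v : V.carrier} (hB : ∀ i ≥ B, V.L1Div i v = 0)
    (N : ℤ) (w : W.carrier) :
    W.expMode N v w = ∑ i ∈ Finset.range B, W.mode (N - i) (V.L1Div i v) w := by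
  rw [expMode_apply]
  refine finsum_eq_sum_of_support_subset _ (Function.support_subset_iff'.mpr fun i hi => ?_)
  rw [hB i (not_lt.mp (mt Finset.mem_range.mpr hi)), map_zero, LinearMap.zero_apply]

lemma expMode_expMode_eq_sum_range {B : ℕ} {u v : V.carrier} (hu : ∀ i ≥ B, V.L1Div i u = 0)
    (hv : ∀ i ≥ B, V.L1Div i v = 0) (M N : ℤ) (w : W.carrier) :
    W.expMode M u (W.expMode N v w) = ∑ t ∈ Finset.range B, ∑ p ∈ Finset.range B,
      W.mode (M - p) (V.L1Div p u) (W.mode (N - t) (V.L1Div t v) w) := by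
  rw [W.expMode_apply_eq_sum_range hv, map_sum]
  exact Finset.sum_congr rfl fun t _ => W.expMode_apply_eq_sum_range hu M _

lemma finsum_smul_expMode_mode (u v : V.carrier) (w : W.carrier) (l m M : ℤ) :
    ∑ᶠ i : ℕ, ((-1 : ℂ) ^ i * cchoose m i) • W.expMode (M - i) (V.mode (l + i) u v) w =
      ∑ᶠ N : ℕ, W.mode (M - N) (VOA.expMulModes m l N u v) w := by
  let f (x : ℕ × ℕ) : W.carrier := ((-1 : ℂ) ^ x.1 * cchoose m x.1) •
    W.mode (M - x.1 - x.2) (V.L1Div x.2 (V.mode (l + x.1) u v)) w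
  have hf : f.HasFiniteSupport := by
    refine hasFiniteSupport_of_curry
      (hasFiniteSupport_of_eventually_eq_zero ?_) fun i =>
      hasFiniteSupport_of_eventually_eq_zero ?_
    · filter_upwards [V.eventually_mode_add_eq_zero u v l] with i hi
      ext r
      simp only [f, hi, map_zero, LinearMap.zero_apply, smul_zero, Pi.zero_apply]
    · filter_upwards [VOA.eventually_L1Div_eq_zero (V.mode (l + i) u v)] with r hr
      simp only [f, hr, map_zero, LinearMap.zero_apply, smul_zero]
  calc _ = ∑ᶠ (i : ℕ) (r : ℕ), f (i, r) := by
        simp only [f, expMode_apply, smul_finsum]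
    _ = ∑ᶠ N, ∑ x ∈ antidiagonal N, f x := by
        rw [← finsum_curry f hf, finsum_eq_finsum_sum_antidiagonal hf]
    _ = _ := by
        refine finsum_congr fun N => ?_
        rw [VOA.expMulModes, LinearMap.sum_apply, map_sum, LinearMap.sum_apply]
        refine Finset.sum_congr rfl fun x hx => ?_
        have hN : M - x.1 - x.2 = M - N := by
          rw [← mem_antidiagonal.mp hx]
          push_cast
          ring
        rw [LinearMap.smul_apply, map_smul, LinearMap.smul_apply, Module.End.mul_apply]
        simp only [f, hN]

lemma finsum_cchoose_smul_mode_mode_L1Div (u v : V.carrier) (w : W.carrier) (l a b : ℤ) :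
    ∑ᶠ (t : ℕ) (p : ℕ) (j : ℕ), cchoose (a - p) j •
        W.mode (a - p + (b - t) - j) (V.mode (l + j) (V.L1Div p u) (V.L1Div t v)) w =
      ∑ᶠ N : ℕ, W.mode (a + b - N)
        ((∑ x ∈ antidiagonal N, VOA.conjMode a l x.2 u * V.L1Div x.1) v) w := by
  let f (x : ℕ × ℕ × ℕ) : W.carrier := cchoose (a - x.2.1) x.2.2 •
    W.mode (a - x.2.1 + (b - x.1) - x.2.2)
      (V.mode (l + x.2.2) (V.L1Div x.2.1 u) (V.L1Div x.1 v)) w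
  have hf : f.HasFiniteSupport := by
    refine hasFiniteSupport_of_curry (hasFiniteSupport_of_eventually_eq_zero ?_) fun t =>
      hasFiniteSupport_of_curry (hasFiniteSupport_of_eventually_eq_zero ?_) fun p =>
      W.hasFiniteSupport_borcherds_left (V.L1Div p u) (V.L1Div t v) w l (a - p) (b - t)
    · filter_upwards [VOA.eventually_L1Div_eq_zero v] with t ht
      ext x
      simp only [f, ht, map_zero, LinearMap.zero_apply, smul_zero, Pi.zero_apply]
    · filter_upwards [VOA.eventually_L1Div_eq_zero u] with p hp
      ext j
      simp only [f, hp, map_zero, LinearMap.zero_apply, smul_zero, Pi.zero_apply]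
  rw [← finsum_curry₃ f hf, finsum_eq_finsum_sum_antidiagonal₃ hf]
  refine finsum_congr fun N => ?_
  simp only [LinearMap.sum_apply, map_sum, Module.End.mul_apply, VOA.conjMode,
    LinearMap.smul_apply, map_smul]
  refine Finset.sum_congr rfl fun x hx => Finset.sum_congr rfl fun y hy => ?_
  have hN : a - y.1 + (b - x.1) - y.2 = a + b - N := by
    rw [← mem_antidiagonal.mp hx, ← mem_antidiagonal.mp hy]
    push_cast
    ring
  simp only [f, hN]

lemma finsum_smul_mode_mode_L1Div_sub (u v : V.carrier) (w : W.carrier) (l a b : ℤ) :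
    ∑ᶠ (t : ℕ) (p : ℕ) (i : ℕ), ((-1 : ℂ) ^ i * cchoose l i) •
        (W.mode (l + (a - p) - i) (V.L1Div p u) (W.mode (b - t + i) (V.L1Div t v) w) -
          (-1 : ℂ) ^ l •
            W.mode (l + (b - t) - i) (V.L1Div t v) (W.mode (a - p + i) (V.L1Div p u) w)) =
      ∑ᶠ i : ℕ, ((-1 : ℂ) ^ i * cchoose l i) •
        (W.expMode (l + a - i) u (W.expMode (b + i) v w) -
          (-1 : ℂ) ^ l • W.expMode (l + b - i) v (W.expMode (a + i) u w)) := by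
  obtain ⟨B, hB⟩ := Filter.eventually_atTop.mp
    ((VOA.eventually_L1Div_eq_zero u).and (VOA.eventually_L1Div_eq_zero v))
  have hBu (i) (hi : i ≥ B) := (hB i hi).1
  have hBv (i) (hi : i ≥ B) := (hB i hi).2
  let s : Finset (ℕ × ℕ) := Finset.range B ×ˢ Finset.range B
  let g (x : ℕ × ℕ) (i : ℕ) : W.carrier := ((-1 : ℂ) ^ i * cchoose l i) •
    (W.mode (l + (a - x.2) - i) (V.L1Div x.2 u) (W.mode (b - x.1 + i) (V.L1Div x.1 v) w) -
      (-1 : ℂ) ^ l •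
        W.mode (l + (b - x.1) - i) (V.L1Div x.1 v) (W.mode (a - x.2 + i) (V.L1Div x.2 u) w))
  have hg (x : ℕ × ℕ) : (g x).HasFiniteSupport :=
    W.hasFiniteSupport_borcherds_right (V.L1Div x.2 u) (V.L1Div x.1 v) w l (a - x.2) (b - x.1)
  have hs : (fun x => ∑ᶠ i, g x i).support ⊆ s := by
    refine Function.support_subset_iff'.mpr fun x hx => finsum_eq_zero_of_forall_eq_zero fun i => ?_
    rcases not_and_or.mp (mt Finset.mem_product.mpr hx) with ht | hp
    · simp only [g, hBv _ (not_lt.mp (mt Finset.mem_range.mpr ht)), map_zero,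
        LinearMap.zero_apply, smul_zero, sub_zero]
    · simp only [g, hBu _ (not_lt.mp (mt Finset.mem_range.mpr hp)), map_zero,
        LinearMap.zero_apply, smul_zero, sub_zero]
  calc _ = ∑ᶠ i, ∑ x ∈ s, g x i := by
        rw [← finsum_curry (fun x => ∑ᶠ i, g x i) (s.finite_toSet.subset hs),
          finsum_eq_sum_of_support_subset _ hs, finsum_sum_comm _ _ fun x _ => hg x]
    _ = _ := by
        refine finsum_congr fun i => ?_
        rw [W.expMode_expMode_eq_sum_range hBu hBv, W.expMode_expMode_eq_sum_range hBv hBu,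
          ← Finset.sum_product', ← Finset.sum_product_right',
          Finset.smul_sum, ← Finset.sum_sub_distrib, Finset.smul_sum]
        refine Finset.sum_congr rfl fun x _ => ?_
        simp only [g, sub_add_eq_add_sub, ← add_sub_assoc, sub_right_comm _ (i : ℤ)]

theorem expMode_borcherds {h l m a : ℤ} {u : V.carrier} (hu : u ∈ V.wtSpace h)
    (ha : l + m + a = 2 * h - 2) (v : V.carrier) (w : W.carrier) (b : ℤ) :
    ∑ᶠ i : ℕ, ((-1 : ℂ) ^ i * cchoose m i) • W.expMode (a + b - i) (V.mode (l + i) u v) w =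
      ∑ᶠ i : ℕ, ((-1 : ℂ) ^ i * cchoose l i) •
        (W.expMode (l + a - i) u (W.expMode (b + i) v w) -
          (-1 : ℂ) ^ l • W.expMode (l + b - i) v (W.expMode (a + i) u w)) := by
  calc _ = ∑ᶠ (t : ℕ) (p : ℕ) (j : ℕ), cchoose (a - p) j •
          W.mode (a - p + (b - t) - j) (V.mode (l + j) (V.L1Div p u) (V.L1Div t v)) w := by
        rw [W.finsum_smul_expMode_mode, finsum_cchoose_smul_mode_mode_L1Div]
        simp only [VOA.expMulModes_eq_sum_conjMode_mul hu ha]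
    _ = _ := by
        simp only [mode_borcherds, ← finsum_smul_mode_mode_L1Div_sub]

end WeakModule

namespace VOA

variable (V : VOA)

/-- The projection onto the weight space `V₍ₕ₎`, as a linear map. -/
def wtProj (h : ℤ) : Module.End ℂ V.carrier := IsLinearMap.mk' _ (V.proj_linear h)

variable {V}

lemma hasFiniteSupport_wtProj (v : V.carrier) : (fun h => V.wtProj h v).HasFiniteSupport :=
  V.proj_finite v

lemma wtProj_of_mem {h : ℤ} {v : V.carrier} (hv : v ∈ V.wtSpace h) : V.wtProj h v = v :=
  V.proj_eq h v hv

lemma wtProj_of_mem_of_ne {h k : ℤ} {v : V.carrier} (hv : v ∈ V.wtSpace h) (hk : k ≠ h) :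
    V.wtProj k v = 0 :=
  V.proj_ne h k hk.symm v hv

lemma L1_one : V.L1 V.one = 0 := V.create_nonneg V.omega 2 zero_le_two

lemma L1_omega : V.L1 V.omega = 0 := by
  have h := V.virasoro 1 (-2) V.one
  have h₂ : V.op V.omega (1 + 1) V.one = 0 := V.create_nonneg _ _ (by norm_num)
  have h₀ : V.op V.omega (1 + -2 + 1) V.one = 0 := V.create_nonneg _ _ (by norm_num)
  have h₁ : V.op V.omega (-2 + 1) V.one = V.omega := V.create _
  rw [h₂, h₀, h₁, (V.op_linear_right _ _).map_zero, if_neg (by norm_num)] at h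
  simpa using! h

end VOA

namespace WeakModule

variable {V : VOA} (W : WeakModule V)

lemma expMode_of_L1_eq_zero {v : V.carrier} (hv : V.L1 v = 0) (N : ℤ) :
    W.expMode N v = W.mode N v := by
  have hdiv (i : ℕ) (hi : i ≠ 0) : V.L1Div i v = 0 := by
    rw [VOA.L1Div, LinearMap.smul_apply, ← Nat.succ_pred hi, pow_succ, Module.End.mul_apply, hv,
      map_zero, smul_zero]
  refine (finsum_eq_single _ 0 fun i hi => ?_).trans ?_
  · rw [hdiv i hi, map_zero]
  · rw [VOA.L1Div_zero, Module.End.one_apply, Nat.cast_zero, sub_zero]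

lemma eventually_expMode_add_eq_zero (v : V.carrier) (w : W.carrier) (a : ℤ) :
    ∀ᶠ i : ℕ in Filter.atTop, W.expMode (a + i) v w = 0 := by
  obtain ⟨B, hB⟩ := Filter.eventually_atTop.mp (VOA.eventually_L1Div_eq_zero v)
  filter_upwards [(Filter.eventually_all_finset (Finset.range B)).mpr fun j _ =>
    W.eventually_mode_add_eq_zero (V.L1Div j v) w (a - j)] with i hi
  rw [W.expMode_apply_eq_sum_range hB]
  refine Finset.sum_eq_zero fun j hj => ?_
  rw [← sub_add_eq_add_sub, hi j hj]

lemma hasFiniteSupport_expMode_wtProj (n : ℤ) (v : V.carrier) :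
    (fun h : ℤ => (-1 : ℂ) ^ h • W.expMode (2 * h - 2 - n) (V.wtProj h v)).HasFiniteSupport :=
  (VOA.hasFiniteSupport_wtProj v).subset fun h hh hv => hh (by
    simp only [hv, map_zero, smul_zero])

/-- The operator on `W` whose transpose is the mode `v*ₙ` of the adjoint vertex operator
`Y*(v,x)`: for `v` of weight `h` it is `(-1)^h ∑ᵢ (L(1)^i v / i!)_{2h-n-i-2}`. -/
noncomputable def adjointMode (n : ℤ) : V.carrier →ₗ[ℂ] Module.End ℂ W.carrier where
  toFun v := ∑ᶠ h : ℤ, (-1 : ℂ) ^ h • W.expMode (2 * h - 2 - n) (V.wtProj h v)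
  map_add' u v := by
    rw [← finsum_add_distrib (W.hasFiniteSupport_expMode_wtProj n u)
      (W.hasFiniteSupport_expMode_wtProj n v)]
    simp only [map_add, smul_add]
  map_smul' c v := by
    rw [RingHom.id_apply, smul_finsum]
    simp only [map_smul, smul_comm c]

lemma adjointMode_of_mem_wtSpace {h : ℤ} {v : V.carrier} (hv : v ∈ V.wtSpace h) (n : ℤ) :
    W.adjointMode n v = (-1 : ℂ) ^ h • W.expMode (2 * h - 2 - n) v := by
  refine (finsum_eq_single _ h fun k hk => ?_).trans ?_
  · rw [VOA.wtProj_of_mem_of_ne hv hk, map_zero, smul_zero]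
  · rw [VOA.wtProj_of_mem hv]

lemma adjointMode_one_neg_one : W.adjointMode (-1) V.one = 1 := by
  rw [W.adjointMode_of_mem_wtSpace V.one_wt, W.expMode_of_L1_eq_zero VOA.L1_one, zpow_zero,
    one_smul]
  exact W.mode_one_neg_one

lemma adjointMode_one_of_ne {n : ℤ} (hn : n ≠ -1) : W.adjointMode n V.one = 0 := by
  rw [W.adjointMode_of_mem_wtSpace V.one_wt, W.expMode_of_L1_eq_zero VOA.L1_one,
    W.mode_one_of_ne (by omega), smul_zero]

lemma adjointMode_one_omega : W.adjointMode 1 V.omega = W.mode 1 V.omega := by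
  rw [W.adjointMode_of_mem_wtSpace V.omega_wt, W.expMode_of_L1_eq_zero VOA.L1_omega,
    even_two.neg_one_zpow, one_smul]
  rfl

lemma eventually_adjointMode_sub_eq_zero (v : V.carrier) (w : W.carrier) (a : ℤ) :
    ∀ᶠ i : ℕ in Filter.atTop, W.adjointMode (a - i) v w = 0 := by
  induction v using VOA.homogeneous_induction with
  | homogeneous h v hv =>
    filter_upwards [W.eventually_expMode_add_eq_zero v w (2 * h - 2 - a)] with i hi
    rw [W.adjointMode_of_mem_wtSpace hv, LinearMap.smul_apply, ← sub_add, hi, smul_zero]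
  | add u v hu hv =>
    filter_upwards [hu, hv] with i hu hv
    rw [map_add, LinearMap.add_apply, hu, hv, add_zero]

lemma hasFiniteSupport_adjointMode_borcherds_left (u v : V.carrier) (w : W.carrier)
    (l m n : ℤ) :
    (fun i : ℕ => cchoose m i •
      W.adjointMode (m + n - i) (V.mode (l + i) u v) w).HasFiniteSupport := by
  refine hasFiniteSupport_of_eventually_eq_zero ?_
  filter_upwards [V.eventually_mode_add_eq_zero u v l] with i hi
  rw [hi, map_zero, LinearMap.zero_apply, smul_zero]

lemma hasFiniteSupport_adjointMode_borcherds_right (u v : V.carrier) (w : W.carrier)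
    (l m n : ℤ) :
    (fun i : ℕ => ((-1 : ℂ) ^ i * cchoose l i) •
      (W.adjointMode (n + i) v (W.adjointMode (l + m - i) u w) -
        (-1 : ℂ) ^ l • W.adjointMode (m + i) u
          (W.adjointMode (l + n - i) v w))).HasFiniteSupport := by
  refine hasFiniteSupport_of_eventually_eq_zero ?_
  filter_upwards [W.eventually_adjointMode_sub_eq_zero u w (l + m),
    W.eventually_adjointMode_sub_eq_zero v w (l + n)] with i hu hv
  rw [hu, hv, map_zero, map_zero, smul_zero, sub_zero, smul_zero]

lemma adjointMode_borcherds_of_mem_wtSpace {h k : ℤ} {u v : V.carrier} (hu : u ∈ V.wtSpace h)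
    (hv : v ∈ V.wtSpace k) (w : W.carrier) (l m n : ℤ) :
    ∑ᶠ i : ℕ, cchoose m i • W.adjointMode (m + n - i) (V.mode (l + i) u v) w =
      ∑ᶠ i : ℕ, ((-1 : ℂ) ^ i * cchoose l i) •
        (W.adjointMode (n + i) v (W.adjointMode (l + m - i) u w) -
          (-1 : ℂ) ^ l • W.adjointMode (m + i) u (W.adjointMode (l + n - i) v w)) := by
  let a := 2 * h - 2 - l - m
  let b := 2 * k - 2 - l - n
  let ε : ℂ := (-1) ^ (h + k - l - 1)
  calc _ = ε • ∑ᶠ i : ℕ, ((-1 : ℂ) ^ i * cchoose m i) •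
          W.expMode (a + b - i) (V.mode (l + i) u v) w := by
        rw [smul_finsum]
        refine finsum_congr fun i => ?_
        have hN : 2 * (h + k - (l + i) - 1) - 2 - (m + n - i) = a + b - i := by ring
        have hsign : (-1 : ℂ) ^ (h + k - (l + i) - 1) = ε * (-1) ^ i := by
          rw [show h + k - (l + i) - 1 = h + k - l - 1 - i by ring,
            zpow_sub₀ (neg_ne_zero.mpr one_ne_zero), zpow_natCast, div_eq_mul_inv, ← inv_pow,
            inv_neg_one]
        rw [W.adjointMode_of_mem_wtSpace (VOA.mode_mem_wtSpace hu hv (l + i)), hN, hsign,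
          LinearMap.smul_apply]
        module
    _ = ε • ∑ᶠ i : ℕ, ((-1 : ℂ) ^ i * cchoose l i) •
          (W.expMode (l + a - i) u (W.expMode (b + i) v w) -
            (-1 : ℂ) ^ l • W.expMode (l + b - i) v (W.expMode (a + i) u w)) := by
        rw [W.expMode_borcherds hu (by omega)]
    _ = _ := by
        rw [smul_finsum]
        refine finsum_congr fun i => ?_
        have hε : ε = -((-1) ^ h * (-1) ^ k * (-1) ^ l) := by
          have hne : (-1 : ℂ) ≠ 0 := neg_ne_zero.mpr one_ne_zero
          rw [show ε = (-1) ^ (h + k - l - 1) from rfl, zpow_sub_one₀ hne, zpow_sub₀ hne,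
            zpow_add₀ hne, div_eq_mul_inv, ← inv_zpow, inv_neg_one, mul_neg_one]
        have hl : (-1 : ℂ) ^ l * (-1) ^ l = 1 := by rw [← mul_zpow, neg_one_mul, neg_neg, one_zpow]
        simp only [W.adjointMode_of_mem_wtSpace hu, W.adjointMode_of_mem_wtSpace hv,
          LinearMap.smul_apply, map_smul, hε,
          show 2 * k - 2 - (n + i) = l + b - i by ring,
          show 2 * h - 2 - (m + i) = l + a - i by ring,
          show 2 * h - 2 - (l + m - i) = a + i by ring,
          show 2 * k - 2 - (l + n - i) = b + i by ring]
        match_scalars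
        · ring
        · linear_combination ((-1) ^ i * cchoose l i * (-1) ^ h * (-1) ^ k) * hl

theorem adjointMode_borcherds (u v : V.carrier) (w : W.carrier) (l m n : ℤ) :
    ∑ᶠ i : ℕ, cchoose m i • W.adjointMode (m + n - i) (V.mode (l + i) u v) w =
      ∑ᶠ i : ℕ, ((-1 : ℂ) ^ i * cchoose l i) •
        (W.adjointMode (n + i) v (W.adjointMode (l + m - i) u w) -
          (-1 : ℂ) ^ l • W.adjointMode (m + i) u (W.adjointMode (l + n - i) v w)) := by
  induction u using VOA.homogeneous_induction with
  | homogeneous h u hu =>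
    induction v using VOA.homogeneous_induction with
    | homogeneous k v hv => exact W.adjointMode_borcherds_of_mem_wtSpace hu hv w l m n
    | add v v' hv hv' =>
      simp only [map_add, LinearMap.add_apply, smul_add, add_sub_add_comm]
      rw [finsum_add_distrib (W.hasFiniteSupport_adjointMode_borcherds_left u v w l m n)
          (W.hasFiniteSupport_adjointMode_borcherds_left u v' w l m n), hv, hv',
        ← finsum_add_distrib (W.hasFiniteSupport_adjointMode_borcherds_right u v w l m n)
          (W.hasFiniteSupport_adjointMode_borcherds_right u v' w l m n)]
  | add u u' hu hu' =>
    simp only [map_add, LinearMap.add_apply, smul_add, add_sub_add_comm]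
    rw [finsum_add_distrib (W.hasFiniteSupport_adjointMode_borcherds_left u v w l m n)
        (W.hasFiniteSupport_adjointMode_borcherds_left u' v w l m n), hu, hu',
      ← finsum_add_distrib (W.hasFiniteSupport_adjointMode_borcherds_right u v w l m n)
        (W.hasFiniteSupport_adjointMode_borcherds_right u' v w l m n)]

lemma dmode_eq (v : V.carrier) (n : ℤ) (α : Module.Dual ℂ W.carrier) (w : W.carrier) :
    W.dmode v n α w = α (W.adjointMode n v w) := by
  let eval : Module.End ℂ W.carrier →ₗ[ℂ] ℂ := α ∘ₗ LinearMap.applyₗ w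
  rw [dmode]
  refine Eq.trans (finsum_congr fun h => ?_)
    (map_finsum eval (W.hasFiniteSupport_expMode_wtProj n v)).symm
  have hexp : eval (W.expMode (2 * h - 2 - n) (V.wtProj h v)) =
      ∑ᶠ i : ℕ, α (W.mode (2 * h - 2 - n - i) (V.L1Div i (V.wtProj h v)) w) :=
    map_finsum eval (W.hasFiniteSupport_mode_L1Div _ _)
  rw [map_smul, hexp, smul_finsum]
  refine finsum_congr fun i => ?_
  have hL1Div : V.L1Div i (V.wtProj h v) = (i.factorial : ℂ)⁻¹ • (V.L 1)^[i] (V.proj h v) := by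
    rw [VOA.L1Div, LinearMap.smul_apply, Module.End.pow_apply]
    rfl
  have hmode : 2 * h - n - i - 2 = 2 * h - 2 - n - i := by ring
  rw [hL1Div, map_smul, LinearMap.smul_apply, map_smul, mode_apply, hmode, smul_eq_mul,
    smul_eq_mul, div_eq_mul_inv, mul_assoc]

lemma coe_mem_DW_iff {α : Module.Dual ℂ W.carrier} :
    ⇑α ∈ W.DW ↔ ∀ v, ∀ᶠ n in Filter.atTop, (W.adjointMode n v).dualMap α = 0 := by
  simp only [DW, Set.mem_ofPred_eq, dmode_eq, α.isLinear, true_and, Filter.eventually_atTop,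
    LinearMap.ext_iff, LinearMap.dualMap_apply, LinearMap.zero_apply]

/-- `D(W)` as a subspace of the algebraic dual of `W`. -/
def dualSubmodule : Submodule ℂ (Module.Dual ℂ W.carrier) where
  carrier := {α | ⇑α ∈ W.DW}
  zero_mem' := W.coe_mem_DW_iff.mpr fun v => .of_forall fun n => map_zero _
  add_mem' hα hβ := W.coe_mem_DW_iff.mpr fun v => by
    filter_upwards [W.coe_mem_DW_iff.mp hα v, W.coe_mem_DW_iff.mp hβ v] with n hα hβ
    rw [map_add, hα, hβ, add_zero]
  smul_mem' c α hα := W.coe_mem_DW_iff.mpr fun v => by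
    filter_upwards [W.coe_mem_DW_iff.mp hα v] with n hα
    rw [map_smul, hα, smul_zero]

lemma mem_dualSubmodule_iff {α : Module.Dual ℂ W.carrier} :
    α ∈ W.dualSubmodule ↔ ∀ v, ∀ᶠ n in Filter.atTop, (W.adjointMode n v).dualMap α = 0 :=
  W.coe_mem_DW_iff

lemma adjointMode_commutator (u v : V.carrier) (w : W.carrier) (m n : ℤ) :
    W.adjointMode n v (W.adjointMode m u w) - W.adjointMode m u (W.adjointMode n v w) =
      ∑ᶠ i : ℕ, cchoose m i • W.adjointMode (m + n - i) (V.mode i u v) w := by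
  have borcherds := W.adjointMode_borcherds u v w 0 m n
  rw [finsum_eq_single (fun i : ℕ => ((-1 : ℂ) ^ i * cchoose 0 i) • _) 0 fun i hi => by
    rw [← Nat.succ_pred hi, cchoose_zero_succ, mul_zero, zero_smul]] at borcherds
  simpa [cchoose_zero] using borcherds.symm

lemma dualMap_adjointMode_mem_dualSubmodule {α : Module.Dual ℂ W.carrier}
    (hα : α ∈ W.dualSubmodule) (u : V.carrier) (m : ℤ) :
    (W.adjointMode m u).dualMap α ∈ W.dualSubmodule := by
  rw [mem_dualSubmodule_iff] at hα ⊢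
  intro v
  obtain ⟨B, hB⟩ := Filter.eventually_atTop.mp (V.eventually_mode_add_eq_zero u v 0)
  have hmodes : ∀ᶠ n in Filter.atTop, ∀ i ∈ Finset.range B,
      (W.adjointMode (m + n - i) (V.mode i u v)).dualMap α = 0 :=
    (Filter.eventually_all_finset _).mpr fun i _ =>
      (Filter.tendsto_atTop_add_const_right _ _ <|
        Filter.tendsto_atTop_add_const_left _ _ Filter.tendsto_id).eventually (hα (V.mode i u v))
  filter_upwards [hα v, hmodes] with n hv hmodes
  ext w
  have hterm (i : ℕ) : α (cchoose m i • W.adjointMode (m + n - i) (V.mode i u v) w) = 0 := by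
    by_cases hi : i < B
    · rw [map_smul, ← LinearMap.dualMap_apply, hmodes i (Finset.mem_range.mpr hi),
        LinearMap.zero_apply, smul_zero]
    · have huv := hB i (not_lt.mp hi)
      rw [zero_add] at huv
      rw [huv, map_zero, LinearMap.zero_apply, smul_zero, map_zero]
  have hcomm : α (W.adjointMode n v (W.adjointMode m u w) -
      W.adjointMode m u (W.adjointMode n v w)) = 0 := by
    rw [adjointMode_commutator]
    exact finsum_induction (α · = 0) (map_zero α)
      (fun x y hx hy => by rw [map_add, hx, hy, add_zero]) hterm
  have hvα : α (W.adjointMode n v (W.adjointMode m u w)) = 0 := LinearMap.congr_fun hv _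
  rwa [map_sub, hvα, zero_sub, neg_eq_zero] at hcomm

/-- The modes `v*ₙ` of the adjoint vertex operators on `D(W)`, the transposes of the operators
`adjointMode`. -/
noncomputable def dualMode (n : ℤ) : V.carrier →ₗ[ℂ] Module.End ℂ W.dualSubmodule where
  toFun v := (W.adjointMode n v).dualMap.restrict fun _ hα =>
    W.dualMap_adjointMode_mem_dualSubmodule hα v n
  map_add' u v := by
    ext α w
    simp
  map_smul' c v := by
    ext α w
    simp

lemma dualMode_apply_apply (n : ℤ) (v : V.carrier) (α : W.dualSubmodule) (w : W.carrier) :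
    (W.dualMode n v α).1 w = α.1 (W.adjointMode n v w) := rfl

lemma exists_dualMode_eq_zero (v : V.carrier) (α : W.dualSubmodule) :
    ∃ N : ℤ, ∀ n ≥ N, W.dualMode n v α = 0 := by
  obtain ⟨N, hN⟩ := Filter.eventually_atTop.mp (W.mem_dualSubmodule_iff.mp α.2 v)
  exact ⟨N, fun n hn => Subtype.ext (hN n hn)⟩

lemma eventually_dualMode_add_eq_zero (v : V.carrier) (α : W.dualSubmodule) (a : ℤ) :
    ∀ᶠ i : ℕ in Filter.atTop, W.dualMode (a + i) v α = 0 := by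
  obtain ⟨N, hN⟩ := W.exists_dualMode_eq_zero v α
  filter_upwards [Filter.eventually_ge_atTop (N - a).toNat] with i hi
  exact hN _ (by omega)

lemma dualMode_borcherds (u v : V.carrier) (α : W.dualSubmodule) (l m n : ℤ) :
    ∑ᶠ i : ℕ, cchoose m i • W.dualMode (m + n - i) (V.mode (l + i) u v) α =
      ∑ᶠ i : ℕ, ((-1 : ℂ) ^ i * cchoose l i) •
        (W.dualMode (l + m - i) u (W.dualMode (n + i) v α) -
          (-1 : ℂ) ^ l • W.dualMode (l + n - i) v (W.dualMode (m + i) u α)) := by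
  ext w
  let eval : W.dualSubmodule →ₗ[ℂ] ℂ := LinearMap.applyₗ w ∘ₗ W.dualSubmodule.subtype
  have hleft : (fun i : ℕ => cchoose m i •
      W.dualMode (m + n - i) (V.mode (l + i) u v) α).HasFiniteSupport := by
    refine hasFiniteSupport_of_eventually_eq_zero ?_
    filter_upwards [V.eventually_mode_add_eq_zero u v l] with i hi
    rw [hi, map_zero, LinearMap.zero_apply, smul_zero]
  have hright : (fun i : ℕ => ((-1 : ℂ) ^ i * cchoose l i) •
      (W.dualMode (l + m - i) u (W.dualMode (n + i) v α) -
        (-1 : ℂ) ^ l • W.dualMode (l + n - i) v (W.dualMode (m + i) u α))).HasFiniteSupport := by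
    refine hasFiniteSupport_of_eventually_eq_zero ?_
    filter_upwards [W.eventually_dualMode_add_eq_zero v α n,
      W.eventually_dualMode_add_eq_zero u α m] with i hv hu
    rw [hv, hu, map_zero, map_zero, smul_zero, sub_zero, smul_zero]
  have borcherds := congrArg α.1 (W.adjointMode_borcherds u v w l m n)
  rw [map_finsum α.1 (W.hasFiniteSupport_adjointMode_borcherds_left u v w l m n),
    map_finsum α.1 (W.hasFiniteSupport_adjointMode_borcherds_right u v w l m n)] at borcherds
  refine (map_finsum eval hleft).trans (Eq.trans ?_ (map_finsum eval hright).symm)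
  simpa only [map_smul, map_sub] using! borcherds

/-- `D(W)` as a weak module, with the adjoint vertex operators `Y*(v,x)`. -/
noncomputable def dual : WeakModule V where
  carrier := W.dualSubmodule
  op v n α := W.dualMode n v α
  op_linear_left n α := (LinearMap.applyₗ α ∘ₗ W.dualMode n).isLinear
  op_linear_right v n := (W.dualMode n v).isLinear
  trunc := W.exists_dualMode_eq_zero
  one_op n α := by
    refine Subtype.ext <| LinearMap.ext fun w => ?_
    split_ifs with hn
    · rw [dualMode_apply_apply, hn, adjointMode_one_neg_one, Module.End.one_apply]
    · rw [dualMode_apply_apply, W.adjointMode_one_of_ne hn, LinearMap.zero_apply, map_zero]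
      rfl
  borcherds := W.dualMode_borcherds

end WeakModule

lemma exists_dual_forall_not_eigenspace_le {K M : Type*} [Field K] [AddCommGroup M] [Module K M]
    {f : Module.End K M} {P : Submodule K M} (hP : P ≤ P.comap f) :
    ∃ α : Module.Dual K M, P ≤ LinearMap.ker α ∧
      ∀ c, ¬ f.eigenspace c ≤ P → ∃ x ∈ f.eigenspace c, α x ≠ 0 := by
  let S := {c // ¬ f.eigenspace c ≤ P}
  choose x hx hxP using fun c : S => SetLike.not_le_iff_exists.mp c.2
  let g : Module.End K (M ⧸ P) := P.mapQ P f hP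
  have eigenvector (c : S) : g.HasEigenvector c (P.mkQ (x c)) := by
    refine ⟨Module.End.mem_eigenspace_iff.mpr ?_, mt (Submodule.Quotient.mk_eq_zero P).mp (hxP c)⟩
    rw [Submodule.mkQ_apply, Submodule.mapQ_apply, Module.End.mem_eigenspace_iff.mp (hx c),
      Submodule.Quotient.mk_smul]
  have independent : LinearIndependent K fun c => P.mkQ (x c) :=
    Module.End.eigenvectors_linearIndependent' _ _ Subtype.val_injective _ eigenvector
  let basis := Module.Basis.span independent
  obtain ⟨β, hβ⟩ := LinearMap.exists_extend (basis.constr K fun _ => (1 : K))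
  refine ⟨β ∘ₗ P.mkQ, fun y hy => ?_, fun c hc => ⟨x ⟨c, hc⟩, hx ⟨c, hc⟩, ?_⟩⟩
  · rw [LinearMap.mem_ker, LinearMap.comp_apply, P.mkQ_apply,
      (Submodule.Quotient.mk_eq_zero P).mpr hy, map_zero]
  · have h := LinearMap.congr_fun hβ (basis ⟨c, hc⟩)
    rw [Module.Basis.constr_basis, LinearMap.comp_apply, Submodule.subtype_apply,
      Module.Basis.span_apply] at h
    rw [LinearMap.comp_apply, h]
    exact one_ne_zero

namespace WeakModule

variable {V : VOA} (W : WeakModule V)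

lemma eig_eq_eigenspace (c : ℂ) : W.eig c = (W.mode 1 V.omega).eigenspace c := by
  ext w
  rw [mem_eig, Module.End.mem_eigenspace_iff]

lemma mode_neg_mem_Cn (m : ℤ) (v : V.carrier) (w : W.carrier) : W.mode (-m) v w ∈ W.Cn m :=
  Submodule.subset_span ⟨v, w, rfl⟩

lemma Cn_succ_le {m : ℤ} (hm : 1 ≤ m) : W.Cn (m + 1) ≤ W.Cn m := by
  refine Submodule.span_le.mpr ?_
  rintro _ ⟨v, w, rfl⟩
  have hm0 : (m : ℂ) ≠ 0 := Int.cast_ne_zero.mpr (by omega)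
  have h : W.mode (-m - 1) v w = (m : ℂ)⁻¹ • W.mode (-m) (V.mode 0 V.omega v) w := by
    rw [mode_mode_zero_omega, Int.cast_neg, neg_neg, LinearMap.smul_apply,
      inv_smul_smul₀ hm0]
  rw [← mode_apply, neg_add', h]
  exact Submodule.smul_mem _ _ (W.mode_neg_mem_Cn m _ w)

lemma Cn_le_Cn {m j : ℤ} (hm : 1 ≤ m) (hj : m ≤ j) : W.Cn j ≤ W.Cn m := by
  induction j, hj using Int.leInduction with
  | base => exact le_rfl
  | succ j hj ih => exact (W.Cn_succ_le (hm.trans hj)).trans ih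

lemma mode_mem_Cn {m n : ℤ} (hm : 1 ≤ m) (hn : n ≤ -m) (v : V.carrier) (w : W.carrier) :
    W.mode n v w ∈ W.Cn m := by
  have h := W.mode_neg_mem_Cn (-n) v w
  rw [neg_neg] at h
  exact W.Cn_le_Cn hm (by omega) h

lemma Cn_le_comap_mode_one_omega (m : ℤ) : W.Cn m ≤ (W.Cn m).comap (W.mode 1 V.omega) := by
  refine Submodule.span_le.mpr ?_
  rintro _ ⟨v, w, rfl⟩
  have hcomm := W.mode_commutator V.omega v w 1 (-m)
  rw [SetLike.mem_coe, Submodule.mem_comap, ← mode_apply, sub_eq_iff_eq_add.mp hcomm]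
  refine add_mem (finsum_induction (· ∈ W.Cn m) (zero_mem _) (fun _ _ => add_mem) ?_)
    (W.mode_neg_mem_Cn m v _)
  rintro (_ | _ | i)
  · refine Submodule.smul_mem _ _ ?_
    rw [Nat.cast_zero, sub_zero, mode_mode_zero_omega, add_sub_cancel_left]
    exact Submodule.smul_mem _ _ (W.mode_neg_mem_Cn m v w)
  · refine Submodule.smul_mem _ _ ?_
    rw [zero_add, Nat.cast_one, add_sub_cancel_left]
    exact W.mode_neg_mem_Cn m _ w
  · have hchoose : cchoose 1 (i + 1 + 1) = 0 := by
      rw [← Nat.cast_one, cchoose_natCast, Nat.choose_eq_zero_of_lt (by omega), Nat.cast_zero]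
    rw [hchoose, zero_smul]
    exact zero_mem _

lemma expMode_mem_Cn {m N : ℤ} (hm : 1 ≤ m) (hN : N ≤ -m) (v : V.carrier) (w : W.carrier) :
    W.expMode N v w ∈ W.Cn m := by
  rw [expMode_apply]
  exact finsum_induction (· ∈ W.Cn m) (zero_mem _) (fun _ _ => add_mem) fun i =>
    W.mode_mem_Cn hm (by omega) _ w

lemma mem_dualSubmodule_of_Cn_le_ker {m : ℤ} (hm : 1 ≤ m) {α : Module.Dual ℂ W.carrier}
    (hα : W.Cn m ≤ LinearMap.ker α) : α ∈ W.dualSubmodule := by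
  rw [mem_dualSubmodule_iff]
  intro v
  induction v using VOA.homogeneous_induction with
  | homogeneous h v hv =>
    filter_upwards [Filter.eventually_ge_atTop (2 * h - 2 + m)] with n hn
    ext w
    rw [LinearMap.dualMap_apply, W.adjointMode_of_mem_wtSpace hv, LinearMap.smul_apply, map_smul,
      hα (W.expMode_mem_Cn hm (by omega) v w), smul_zero, LinearMap.zero_apply]
  | add u v hu hv =>
    filter_upwards [hu, hv] with n hu hv
    ext w
    rw [LinearMap.dualMap_apply, map_add, LinearMap.add_apply, map_add, ← LinearMap.dualMap_apply,
      hu, ← LinearMap.dualMap_apply, hv, LinearMap.zero_apply, add_zero]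

lemma eq_of_mem_eig_dual {c d : ℂ} {α : W.dualSubmodule} (hα : α ∈ W.dual.eig c) {w : W.carrier}
    (hw : w ∈ W.eig d) (hne : α.1 w ≠ 0) : d = c := by
  have h : (W.dualMode 1 V.omega α).1 w = (c • α).1 w :=
    congrArg (fun β : W.dualSubmodule => β.1 w) (W.dual.mem_eig.mp hα)
  rw [dualMode_apply_apply, adjointMode_one_omega, W.mem_eig.mp hw, map_smul] at h
  exact mul_right_cancel₀ hne h

lemma finite_setOf_exists_mem_eig_ne_zero (hA : V.classA) (α : W.dualSubmodule) :
    {c | ∃ w ∈ W.eig c, α.1 w ≠ 0}.Finite := by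
  have hspan (β : W.dual.carrier) : β ∈ ⨆ c, W.dual.eig c := by
    rw [hA W.dual]
    exact Submodule.mem_top
  refine Submodule.iSup_induction W.dual.eig
    (motive := fun β : W.dualSubmodule => {c | ∃ w ∈ W.eig c, β.1 w ≠ 0}.Finite) (hspan α) ?_ ?_ ?_
  · rintro c β hβ
    exact (Set.finite_singleton c).subset fun d ⟨w, hw, hne⟩ => W.eq_of_mem_eig_dual hβ hw hne
  · exact Set.finite_empty.subset fun d ⟨w, _, hne⟩ => hne rfl
  · intro β γ hβ hγ
    refine (hβ.union hγ).subset fun d ⟨w, hw, hne⟩ => ?_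
    by_cases h : β.1 w = 0
    · exact .inr ⟨w, hw, fun h' => hne ((congrArg₂ (· + ·) h h').trans (add_zero 0))⟩
    · exact .inl ⟨w, hw, h⟩

theorem finite_setOf_not_eig_le_Cn (hA : V.classA) {m : ℤ} (hm : 1 ≤ m) :
    {c | ¬ W.eig c ≤ W.Cn m}.Finite := by
  obtain ⟨α, hα, hne⟩ := exists_dual_forall_not_eigenspace_le (W.Cn_le_comap_mode_one_omega m)
  let β : W.dualSubmodule := ⟨α, W.mem_dualSubmodule_of_Cn_le_ker hm hα⟩
  refine (W.finite_setOf_exists_mem_eig_ne_zero hA β).subset fun c hc => ?_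
  simp only [Set.mem_ofPred_eq, eig_eq_eigenspace] at hc ⊢
  exact hne c hc

end WeakModule

namespace VOA

variable (V : VOA)

/-- The subspace `⊕_{n ≤ K} V₍ₙ₎`. -/
def wtSpaceLE (K : ℤ) : Submodule ℂ V.carrier := ⨆ n ≤ K, V.wtSpace n

lemma wtSpace_le_wtSpaceLE {n K : ℤ} (hn : n ≤ K) : V.wtSpace n ≤ V.wtSpaceLE K :=
  le_iSup₂_of_le n hn le_rfl

lemma wtSpaceLE_fg (K : ℤ) : (V.wtSpaceLE K).FG := by
  obtain ⟨N, hN⟩ := V.lower_trunc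
  have hsup : V.wtSpaceLE K = ⨆ n ∈ Finset.Icc N K, V.wtSpace n := by
    refine le_antisymm (iSup₂_le fun n hn => ?_) (iSup₂_mono' fun n hn =>
      ⟨n, (Finset.mem_Icc.mp hn).2, le_rfl⟩)
    rcases lt_or_ge n N with hlt | hge
    · exact (hN n hlt).le.trans bot_le
    · exact le_iSup₂_of_le n (Finset.mem_Icc.mpr ⟨hge, hn⟩) le_rfl
  rw [hsup]
  exact Submodule.fg_biSup _ _ fun n _ => Module.Finite.iff_fg.mp (V.fd n)

variable {V}

lemma wtSpace_le_eig_adjoint (n : ℤ) : V.wtSpace n ≤ V.adjoint.eig n := fun v hv =>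
  V.adjoint.mem_eig.mpr (V.L_zero n v hv)

lemma exists_forall_gt_wtSpace_le_Cn (hA : V.classA) {m : ℤ} (hm : 1 ≤ m) :
    ∃ K : ℤ, ∀ n > K, V.wtSpace n ≤ V.adjoint.Cn m := by
  obtain ⟨K, hK⟩ := ((V.adjoint.finite_setOf_not_eig_le_Cn hA hm).preimage
    Int.cast_injective.injOn).bddAbove
  refine ⟨K, fun n hn => (wtSpace_le_eig_adjoint n).trans ?_⟩
  by_contra h
  exact hn.not_ge (hK h)

theorem finiteDimensional_quotient_C2 (hA : V.classA) :
    FiniteDimensional ℂ (V.carrier ⧸ V.C2) := by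
  obtain ⟨K, hK⟩ := exists_forall_gt_wtSpace_le_Cn hA one_le_two
  have hsup : V.C2 ⊔ V.wtSpaceLE K = ⊤ := by
    refine eq_top_iff.mpr fun v _ => ?_
    induction v using homogeneous_induction with
    | homogeneous n v hv =>
      rcases le_or_gt n K with hn | hn
      · exact Submodule.mem_sup_right (V.wtSpace_le_wtSpaceLE hn hv)
      · exact Submodule.mem_sup_left (hK n hn hv)
    | add u v hu hv => exact add_mem (hu trivial) (hv trivial)
  refine ⟨?_⟩
  rw [← (Submodule.map_mkQ_eq_top _ _).mpr hsup]
  exact (V.wtSpaceLE_fg K).map _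

variable (V) in
/-- The span of the iterated modes `u¹_{n₁} ⋯ uʳ_{n_r} 1` with `uⁱ ∈ U`: the subalgebra generated
by `U`. -/
def generated (U : Set V.carrier) : Submodule ℂ V.carrier :=
  Submodule.span ℂ {x | ∃ l : List (V.carrier × ℤ),
    (∀ p ∈ l, p.1 ∈ U) ∧ x = V.iterApply l V.one}

lemma subset_generated (U : Set V.carrier) : U ⊆ V.generated U := fun u hu =>
  Submodule.subset_span ⟨[(u, -1)], List.forall_mem_singleton.mpr hu, (V.create u).symm⟩

lemma generated_le_comap_mode {U : Set V.carrier} {u : V.carrier} (hu : u ∈ U) (n : ℤ) :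
    V.generated U ≤ (V.generated U).comap (V.mode n u) := by
  refine Submodule.span_le.mpr ?_
  rintro _ ⟨l, hl, rfl⟩
  exact Submodule.subset_span ⟨(u, n) :: l, List.forall_mem_cons.mpr ⟨hu, hl⟩, rfl⟩

lemma mode_iterApply_mem_generated {U : Set V.carrier} (l : List (V.carrier × ℤ))
    (hl : ∀ p ∈ l, p.1 ∈ U) (n : ℤ) {w : V.carrier} (hw : w ∈ V.generated U) :
    V.mode n (V.iterApply l V.one) w ∈ V.generated U := by
  induction l generalizing n w with
  | nil =>
    rw [mode_apply, iterApply, V.one_op]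
    split_ifs
    · exact hw
    · exact zero_mem _
  | cons p l ih =>
    obtain ⟨hp, hl⟩ := List.forall_mem_cons.mp hl
    have hiter := V.adjoint.mode_mode p.1 (V.iterApply l V.one) w p.2 n
    refine Set.mem_of_eq_of_mem hiter ?_
    refine finsum_induction (· ∈ V.generated U) (zero_mem _) (fun _ _ => add_mem) fun i =>
      Submodule.smul_mem _ _ (sub_mem ?_ (Submodule.smul_mem _ _ ?_))
    · exact generated_le_comap_mode hp _ (ih hl _ hw)
    · exact ih hl _ (generated_le_comap_mode hp _ hw)

lemma mode_mem_generated {U : Set V.carrier} {u w : V.carrier} (hu : u ∈ V.generated U)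
    (hw : w ∈ V.generated U) (n : ℤ) : V.mode n u w ∈ V.generated U := by
  have hle : V.generated U ≤
      (V.generated U).comap ((V.mode n).flip w) := by
    refine Submodule.span_le.mpr ?_
    rintro _ ⟨l, hl, rfl⟩
    exact mode_iterApply_mem_generated l hl n hw
  exact hle hu

-- If `u` and `v` have weights `a` and `b`, then `u_{-m} v` has weight `a + b + m - 1`, which
-- exceeds both `a` and `b` when `m ≥ 2 - N`.
lemma wtProj_mode_mem {G : Submodule ℂ V.carrier}
    (hG : ∀ u ∈ G, ∀ v ∈ G, ∀ n, V.mode n u v ∈ G) {N m n : ℤ}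
    (hN : ∀ a < N, V.wtSpace a = ⊥) (hm : 2 - N ≤ m) (hlow : ∀ a < n, V.wtSpace a ≤ G)
    (u v : V.carrier) : V.wtProj n (V.mode (-m) u v) ∈ G := by
  induction u using homogeneous_induction with
  | homogeneous a u hu =>
    induction v using homogeneous_induction with
    | homogeneous b v hv =>
      have huv := mode_mem_wtSpace hu hv (-m)
      by_cases hn : n = a + b - -m - 1
      · rcases lt_or_ge a N with ha | ha
        · rw [(Submodule.eq_bot_iff _).mp (hN a ha) u hu, map_zero, LinearMap.zero_apply, map_zero]
          exact zero_mem _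
        rcases lt_or_ge b N with hb | hb
        · rw [(Submodule.eq_bot_iff _).mp (hN b hb) v hv, map_zero, map_zero]
          exact zero_mem _
        rw [wtProj_of_mem (hn ▸ huv)]
        exact hG u (hlow a (by omega) hu) v (hlow b (by omega) hv) (-m)
      · rw [wtProj_of_mem_of_ne huv hn]
        exact zero_mem _
    | add v v' hv hv' =>
      rw [map_add, map_add]
      exact add_mem hv hv'
  | add u u' hu hu' =>
    rw [map_add, LinearMap.add_apply, map_add]
    exact add_mem hu hu'

lemma eq_top_of_wtSpace_le_of_mode_mem {G : Submodule ℂ V.carrier}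
    (hG : ∀ u ∈ G, ∀ v ∈ G, ∀ n, V.mode n u v ∈ G) {N m K : ℤ}
    (hN : ∀ a < N, V.wtSpace a = ⊥) (hm : 2 - N ≤ m)
    (hK : ∀ n > K, V.wtSpace n ≤ V.adjoint.Cn m) (hlow : ∀ n ≤ K, V.wtSpace n ≤ G) :
    G = ⊤ := by
  have hwt (n : ℤ) : V.wtSpace n ≤ G := by
    induction n using Int.strongRec (m := K + 1) with
    | lt n hn => exact hlow n (by omega)
    | ge n hn ih =>
      have hCn : V.adjoint.Cn m ≤ G.comap (V.wtProj n) := by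
        refine Submodule.span_le.mpr ?_
        rintro _ ⟨u, v, rfl⟩
        exact wtProj_mode_mem hG hN hm ih u v
      intro v hv
      rw [← wtProj_of_mem hv]
      exact hCn (hK n (by omega) hv)
  refine eq_top_iff.mpr fun v _ => ?_
  induction v using homogeneous_induction with
  | homogeneous n v hv => exact hwt n hv
  | add u v hu hv => exact add_mem (hu trivial) (hv trivial)

theorem finitelyGenerated (hA : V.classA) : V.FinitelyGenerated := by
  obtain ⟨N, hN⟩ := V.lower_trunc
  obtain ⟨K, hK⟩ := exists_forall_gt_wtSpace_le_Cn hA (le_max_left 1 (2 - N))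
  obtain ⟨S, hS⟩ := V.wtSpaceLE_fg K
  have hlow : V.wtSpaceLE K ≤ V.generated S :=
    hS ▸ Submodule.span_le.mpr (subset_generated _)
  exact ⟨S, eq_top_of_wtSpace_le_of_mode_mem (fun u hu v hv => mode_mem_generated hu hv) hN
    (le_max_right _ _) hK fun n hn => (V.wtSpace_le_wtSpaceLE hn).trans hlow⟩

lemma classA_of_regular (hV : V.regular) : V.classA := by
  intro M
  obtain ⟨ι, S, hS, -, htop⟩ := hV M
  rw [eq_top_iff, ← htop]
  exact iSup_le fun i => (hS i).2.1.trans (iSup_mono fun _ => inf_le_left)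

end VOA

/-- Every VOA of class 𝒜 satisfies the `C₂`-finiteness condition
and is finitely generated; in particular every regular VOA satisfies the
`C₂`-finiteness condition and is finitely generated. -/
theorem C2_finite_and_finitelyGenerated (V : VOA) :
    (V.classA → FiniteDimensional ℂ (V.carrier ⧸ V.C2) ∧ V.FinitelyGenerated) ∧
    (V.regular → FiniteDimensional ℂ (V.carrier ⧸ V.C2) ∧ V.FinitelyGenerated) := by
  have main (hA : V.classA) :
      FiniteDimensional ℂ (V.carrier ⧸ V.C2) ∧ V.FinitelyGenerated :=
    ⟨VOA.finiteDimensional_quotient_C2 hA, VOA.finitelyGenerated hA⟩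
  exact ⟨main, fun hV => main (VOA.classA_of_regular hV)⟩
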